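/- Let m ≥ 18 and n ≥ m² − m + 1 be integers and let U be any connected graph with n vertices and exactly n edges (a unicyclic graph). Then every graph G on 2n − 1 vertices either contains the fan F_m as a subgraph or its complement contains U as a subgraph. (This is the upper bound R(U, F_m) ≤ 2n − 1 of Theorem 5; together with the standard lower bound it gives R(U, F_m) = 2n − 1.) -/

import Mathlib

/-- `Contains G H` means `G` contains a subgraph isomorphic to `H`, i.e. there is an
injective map on vertices preserving adjacency. -/
def Contains {α β : Type*} (G : SimpleGraph α) (H : SimpleGraph β) : Prop :=
  ∃ f : β → α, Function.Injective f ∧ ∀ ⦃u v⦄, H.Adj u v → G.Adj (f u) (f v)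

/-- The fan `F_m = K_1 + mK_2`: a center vertex joined to `m` disjoint edges,
so `m` triangles sharing exactly one common vertex; it has `2m + 1` vertices. -/
def fan (m : ℕ) : SimpleGraph (Unit ⊕ Fin m × Bool) :=
  SimpleGraph.fromRel (fun x y =>
    (∃ u, x = Sum.inl u) ∨ ∃ i : Fin m, x = Sum.inr (i, true) ∧ y = Sum.inr (i, false))

/-! Let `G` on `2n - 1` vertices contain no fan `F_m`. Every neighbourhood in `G` has a maximum
matching with fewer than `m` edges, and removing the ends of these edges leaves an independent set.

If all degrees in `G` are below `n`, then the minimum degree of `Gᶜ` is at least `n - 1`. A cycle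
as long as that of `U` exists in `Gᶜ`, and the trees hanging off it extend greedily.

Otherwise some neighbourhood yields an independent set `K` of size `n - t` with `t ≤ 2m - 2`, and
only `t` vertices of `U` have to be placed outside `K`.
* If `U` has at most `2m - 2` leaves, it has many vertices of degree at most two at pairwise
  distance at least three, which can be placed outside `K` independently of one another.
* If all leaves but at most one hang at a single vertex `c`, then `c` goes to a vertex whose degree
  in `Gᶜ` is at least `n - 1`; if there were none, `G` would be almost complete bipartite and
  contain the fan.
* In the remaining case there is a second independent set `L` disjoint from `K`. A vertex outside
  both cannot have many neighbours in `K` and in `L`, so one of the two sets has enough outside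
  vertices with few neighbours in it; leaves of `U` go there and their supports go inside. -/

namespace FanRamsey

open Finset
open scoped Classical

section Neighbourhoods

variable {W : Type*} {G : SimpleGraph W} {S T K : Finset W} {x y : W}

/-- The neighbours of `x` in `G` that lie in the finite set `S`. -/
noncomputable def nbhdIn (G : SimpleGraph W) (S : Finset W) (x : W) : Finset W :=
  {y ∈ S | G.Adj x y}

lemma mem_nbhdIn : y ∈ nbhdIn G S x ↔ y ∈ S ∧ G.Adj x y := mem_filter

lemma nbhdIn_subset (G : SimpleGraph W) (S : Finset W) (x : W) : nbhdIn G S x ⊆ S :=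
  filter_subset _ _

lemma nbhdIn_mono (hST : S ⊆ T) (x : W) : nbhdIn G S x ⊆ nbhdIn G T x :=
  filter_subset_filter _ hST

lemma card_nbhdIn_mono (hST : S ⊆ T) (x : W) : #(nbhdIn G S x) ≤ #(nbhdIn G T x) :=
  card_le_card (nbhdIn_mono hST x)

lemma card_nbhdIn_univ [Fintype W] (G : SimpleGraph W) (x : W) :
    #(nbhdIn G univ x) = G.degree x := by
  rw [nbhdIn, ← G.neighborFinset_eq_filter, G.card_neighborFinset_eq_degree]

lemma card_nbhdIn_union (h : Disjoint S T) (x : W) :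
    #(nbhdIn G (S ∪ T) x) = #(nbhdIn G S x) + #(nbhdIn G T x) := by
  rw [nbhdIn, filter_union, card_union_of_disjoint (disjoint_filter_filter h)]
  rfl

lemma card_nbhdIn_add_compl_of_notMem (hx : x ∉ S) :
    #(nbhdIn G S x) + #(nbhdIn Gᶜ S x) = #S := by
  have hcompl : nbhdIn Gᶜ S x = {y ∈ S | ¬ G.Adj x y} := by
    ext y
    simp only [mem_nbhdIn, mem_filter, SimpleGraph.compl_adj]
    exact and_congr_right fun hy => and_iff_right fun e => hx (e ▸ hy)
  rw [hcompl]
  exact card_filter_add_card_filter_not (G.Adj x ·)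

lemma nbhdIn_erase_self (G : SimpleGraph W) (S : Finset W) (x : W) :
    nbhdIn G (S.erase x) x = nbhdIn G S x := by
  ext y
  simp only [mem_nbhdIn, mem_erase]
  exact ⟨fun h => ⟨h.1.2, h.2⟩, fun h => ⟨⟨h.2.ne', h.1⟩, h.2⟩⟩

lemma card_nbhdIn_add_compl_of_mem (hx : x ∈ S) :
    #(nbhdIn G S x) + #(nbhdIn Gᶜ S x) + 1 = #S := by
  rw [← nbhdIn_erase_self G, ← nbhdIn_erase_self Gᶜ,
    card_nbhdIn_add_compl_of_notMem (notMem_erase x S), card_erase_add_one hx]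

lemma card_le_card_nbhdIn_add_compl (hTS : T ⊆ S) (hx : x ∉ T) :
    #T ≤ #(nbhdIn G T x) + #(nbhdIn Gᶜ S x) := by
  rw [← card_nbhdIn_add_compl_of_notMem (G := G) hx]
  exact Nat.add_le_add_left (card_nbhdIn_mono hTS x) _

lemma sum_card_nbhdIn_comm (G : SimpleGraph W) (S T : Finset W) :
    ∑ x ∈ S, #(nbhdIn G T x) = ∑ y ∈ T, #(nbhdIn G S y) := by
  refine (sum_card_bipartiteAbove_eq_sum_card_bipartiteBelow G.Adj).trans
    (sum_congr rfl fun y _ => congrArg card ?_)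
  exact filter_congr fun x _ => G.adj_comm x y

lemma compl_adj_of_isIndepSet (hK : G.IsIndepSet (K : Set W)) (hx : x ∈ K) (hy : y ∈ K)
    (hxy : x ≠ y) : Gᶜ.Adj x y :=
  (G.compl_adj x y).2 ⟨hxy, hK hx hy hxy⟩

lemma card_nbhdIn_le_add_card_sdiff (G : SimpleGraph W) (S T : Finset W) (x : W) :
    #(nbhdIn G S x) ≤ #(nbhdIn G T x) + #(S \ T) := by
  refine (card_le_card fun y hy => ?_).trans (card_union_le _ _)
  simp only [mem_union, mem_nbhdIn, mem_sdiff] at hy ⊢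
  tauto

lemma nbhdIn_eq_empty_of_isIndepSet (hK : G.IsIndepSet (K : Set W)) (hx : x ∈ K) :
    nbhdIn G K x = ∅ :=
  eq_empty_of_forall_notMem fun _ hy =>
    hK hx (mem_nbhdIn.1 hy).1 (mem_nbhdIn.1 hy).2.ne (mem_nbhdIn.1 hy).2

end Neighbourhoods

section DistinctRepresentatives

variable {ι α : Type*} [Nonempty α] {s : Finset ι}

lemma exists_injOn_forall_mem_of_hall {A : ι → Finset α}
    (hA : ∀ t ⊆ s, #t ≤ #(t.biUnion A)) :
    ∃ f : ι → α, Set.InjOn f s ∧ ∀ i ∈ s, f i ∈ A i := by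
  obtain ⟨g, hg, hgA⟩ := (all_card_le_biUnion_card_iff_exists_injective
    fun i : s => A i).1 fun t => by
      have h := hA (t.map (Function.Embedding.subtype _)) (map_subtype_subset t)
      rwa [card_map, map_eq_image, image_biUnion] at h
  refine ⟨fun i => if hi : i ∈ s then g ⟨i, hi⟩ else Classical.arbitrary α, ?_, ?_⟩
  · intro i hi j hj hij
    rw [mem_coe] at hi hj
    simp only [hi, hj, dif_pos] at hij
    exact congrArg Subtype.val (hg hij)
  · intro i hi
    simp only [hi, dif_pos]
    exact hgA ⟨i, hi⟩

lemma exists_injOn_forall_mem {A : ι → Finset α} (hA : ∀ i ∈ s, #s ≤ #(A i)) :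
    ∃ f : ι → α, Set.InjOn f s ∧ ∀ i ∈ s, f i ∈ A i := by
  refine exists_injOn_forall_mem_of_hall fun t hts => ?_
  rcases t.eq_empty_or_nonempty with rfl | ⟨i, hi⟩
  · simp only [card_empty, zero_le]
  · calc #t ≤ #s := card_le_card hts
      _ ≤ #(A i) := hA i (hts hi)
      _ ≤ #(t.biUnion A) := card_le_card (subset_biUnion_of_mem A hi)

end DistinctRepresentatives

section Matchings

variable {W : Type*} {G : SimpleGraph W} {S S' M M' : Finset W} {g g' : W → W} {m : ℕ}

/-- A matching of `G` inside `S`, encoded by the set `M` of left endpoints of its edges and the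
map `g` sending a left endpoint to its partner. -/
structure IsMatchingIn (G : SimpleGraph W) (S M : Finset W) (g : W → W) : Prop where
  subset : M ⊆ S
  partner_mem : ∀ x ∈ M, g x ∈ S
  partner_notMem : ∀ x ∈ M, g x ∉ M
  adj : ∀ x ∈ M, G.Adj x (g x)
  injOn : Set.InjOn g M

namespace IsMatchingIn

lemma mono (h : IsMatchingIn G S M g) (hS : S ⊆ S') : IsMatchingIn G S' M g where
  subset := h.subset.trans hS
  partner_mem x hx := hS (h.partner_mem x hx)
  partner_notMem := h.partner_notMem
  adj := h.adj
  injOn := h.injOn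

lemma restrict (h : IsMatchingIn G S M g) (hM : M' ⊆ M) : IsMatchingIn G S M' g where
  subset := hM.trans h.subset
  partner_mem x hx := h.partner_mem x (hM hx)
  partner_notMem x hx hgx := h.partner_notMem x (hM hx) (hM hgx)
  adj x hx := h.adj x (hM hx)
  injOn := h.injOn.mono (coe_subset.2 hM)

lemma of_adj {x y : W} (hxy : G.Adj x y) (hx : x ∈ S) (hy : y ∈ S) :
    IsMatchingIn G S {x} (fun _ => y) where
  subset := singleton_subset_iff.2 hx
  partner_mem _ _ := hy
  partner_notMem _ _ h := hxy.ne' (mem_singleton.1 h)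
  adj z hz := mem_singleton.1 hz ▸ hxy
  injOn := by rw [coe_singleton]; exact Set.injOn_singleton _ _

lemma union (h : IsMatchingIn G S M g) (h' : IsMatchingIn G S M' g')
    (hd : Disjoint (M ∪ M.image g) (M' ∪ M'.image g')) :
    IsMatchingIn G S (M ∪ M') (M.piecewise g g') := by
  simp only [disjoint_union_left, disjoint_union_right] at hd
  obtain ⟨⟨hMM', hgM'⟩, hMg', hgg'⟩ := hd
  have left : ∀ x ∈ M, M.piecewise g g' x = g x := fun x hx => M.piecewise_eq_of_mem g g' hx
  have right : ∀ x ∈ M', M.piecewise g g' x = g' x := fun x hx =>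
    M.piecewise_eq_of_notMem g g' (disjoint_right.1 hMM' hx)
  refine ⟨union_subset h.subset h'.subset, ?_, ?_, ?_, ?_⟩
  · exact fun x hx => (mem_union.1 hx).elim (fun hx => left x hx ▸ h.partner_mem x hx)
      fun hx => right x hx ▸ h'.partner_mem x hx
  · intro x hx hgx
    rcases mem_union.1 hx with hx | hx
    · rw [left x hx] at hgx
      exact (mem_union.1 hgx).elim (h.partner_notMem x hx)
        (disjoint_left.1 hgM' (mem_image_of_mem g hx))
    · rw [right x hx] at hgx
      exact (mem_union.1 hgx).elim (disjoint_right.1 hMg' (mem_image_of_mem g' hx))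
        (h'.partner_notMem x hx)
  · exact fun x hx => (mem_union.1 hx).elim (fun hx => left x hx ▸ h.adj x hx)
      fun hx => right x hx ▸ h'.adj x hx
  · rw [coe_union, Set.injOn_union (disjoint_coe.2 hMM')]
    refine ⟨h.injOn.congr fun x hx => (left x hx).symm,
      h'.injOn.congr fun x hx => (right x hx).symm, fun x hx y hy hxy => ?_⟩
    rw [left x hx, right y hy] at hxy
    exact disjoint_left.1 hgg' (mem_image_of_mem g hx) (hxy ▸ mem_image_of_mem g' hy)

lemma support_subset (h : IsMatchingIn G S M g) : M ∪ M.image g ⊆ S :=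
  union_subset h.subset (image_subset_iff.2 h.partner_mem)

lemma card_support (h : IsMatchingIn G S M g) : #(M ∪ M.image g) = 2 * #M := by
  rw [card_union_of_disjoint, card_image_of_injOn h.injOn, two_mul]
  rw [disjoint_right]
  rintro _ hy
  obtain ⟨x, hx, rfl⟩ := mem_image.1 hy
  exact h.partner_notMem x hx

end IsMatchingIn

lemma exists_maximum_matching (G : SimpleGraph W) (S : Finset W) :
    ∃ M g, IsMatchingIn G S M g ∧ ∀ M' g', IsMatchingIn G S M' g' → #M' ≤ #M := by
  let P : ℕ → Prop := fun k => ∃ M g, IsMatchingIn G S M g ∧ #M = k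
  have h_empty : P 0 := ⟨∅, id, ⟨empty_subset S, by simp, by simp, by simp, by simp⟩, card_empty⟩
  have h_le : ∀ k, P k → k ≤ #S := by
    rintro k ⟨M, g, h, rfl⟩
    exact card_le_card h.subset
  obtain ⟨M, g, h, hM⟩ := Nat.findGreatest_spec (#S).zero_le h_empty
  refine ⟨M, g, h, fun M' g' h' => ?_⟩
  rw [hM]
  exact Nat.le_findGreatest (h_le _ ⟨M', g', h', rfl⟩) ⟨M', g', h', rfl⟩

lemma IsMatchingIn.isIndepSet_sdiff_support (h : IsMatchingIn G S M g)
    (hmax : ∀ M' g', IsMatchingIn G S M' g' → #M' ≤ #M) :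
    G.IsIndepSet (S \ (M ∪ M.image g) : Finset W) := by
  intro x hx y hy _ hxy
  obtain ⟨hxS, hxM⟩ := mem_sdiff.1 (mem_coe.1 hx)
  obtain ⟨hyS, hyM⟩ := mem_sdiff.1 (mem_coe.1 hy)
  have hd : Disjoint (M ∪ M.image g) ({x} ∪ ({x} : Finset W).image fun _ => y) := by
    rw [image_singleton, disjoint_union_right, disjoint_singleton_right, disjoint_singleton_right]
    exact ⟨hxM, hyM⟩
  have hcard := hmax _ _ (h.union (.of_adj hxy hxS hyS) hd)
  rw [card_union_of_disjoint (disjoint_singleton_right.2 fun hx => hxM (mem_union_left _ hx)),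
    card_singleton] at hcard
  omega

end Matchings

section Fans

variable {W : Type*} {G : SimpleGraph W} {m : ℕ} {v : W}

lemma contains_fan_of_triangles {e : Fin m × Bool → W} (he : Function.Injective e)
    (hv : ∀ y, G.Adj v (e y)) (hadj : ∀ i, G.Adj (e (i, true)) (e (i, false))) :
    Contains G (fan m) := by
  let f : Unit ⊕ Fin m × Bool → W := Sum.elim (fun _ => v) e
  refine ⟨f, ?_, ?_⟩
  · exact (Function.injective_of_subsingleton _).sumElim he fun _ y => (hv y).ne
  · have key : ∀ x y, x ≠ y → ((∃ u, x = Sum.inl u) ∨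
        ∃ i : Fin m, x = Sum.inr (i, true) ∧ y = Sum.inr (i, false)) → G.Adj (f x) (f y) := by
      rintro x y hne (⟨u, rfl⟩ | ⟨i, rfl, rfl⟩)
      · rcases y with u' | y
        · exact absurd rfl hne
        · exact hv y
      · exact hadj i
    intro x y hxy
    obtain ⟨hne, h | h⟩ := (SimpleGraph.fromRel_adj _ x y).1 hxy
    · exact key x y hne h
    · exact (key y x hne.symm h).symm

lemma IsMatchingIn.contains_fan {S M : Finset W} {g : W → W} (h : IsMatchingIn G S M g)
    (hv : ∀ x ∈ S, G.Adj v x) (hm : m ≤ #M) : Contains G (fan m) := by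
  obtain ⟨M', hM', hc⟩ := exists_subset_card_eq hm
  let e : Fin m ≃ M' := (finCongr hc.symm).trans M'.equivFin.symm
  have he : ∀ i, (e i : W) ∈ M := fun i => hM' (e i).2
  have he_inj : ∀ {i j}, (e i : W) = e j → i = j := fun hij => e.injective (Subtype.ext hij)
  refine contains_fan_of_triangles (v := v) (e := fun y => if y.2 then e y.1 else g (e y.1))
    ?_ ?_ fun i => h.adj _ (he i)
  · rintro ⟨i, _ | _⟩ ⟨j, _ | _⟩ hij
    · exact congrArg (·, false) (he_inj (h.injOn (he i) (he j) hij))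
    · exact absurd ((show g (e i) = e j from hij) ▸ he j) (h.partner_notMem _ (he i))
    · exact absurd ((show g (e j) = e i from hij.symm) ▸ he i) (h.partner_notMem _ (he j))
    · exact congrArg (·, true) (he_inj hij)
  · rintro ⟨i, _ | _⟩
    · exact hv _ (h.partner_mem _ (he i))
    · exact hv _ (h.subset (he i))

lemma IsMatchingIn.card_lt_of_fanFree (hG : ¬ Contains G (fan m)) {S M : Finset W} {g : W → W}
    (h : IsMatchingIn G S M g) (hv : ∀ x ∈ S, G.Adj v x) : #M < m := by
  by_contra! hm
  exact hG (h.contains_fan hv hm)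

lemma exists_isIndepSet_of_fanFree [Fintype W] (hG : ¬ Contains G (fan m)) (v : W) :
    ∃ K ⊆ nbhdIn G univ v, G.IsIndepSet (K : Set W) ∧ G.degree v + 2 ≤ #K + 2 * m := by
  obtain ⟨M, g, h, hmax⟩ := exists_maximum_matching G (nbhdIn G univ v)
  refine ⟨_, sdiff_subset, h.isIndepSet_sdiff_support hmax, ?_⟩
  have hM := h.card_lt_of_fanFree hG fun x hx => (mem_nbhdIn.1 hx).2
  have hle := card_le_card h.support_subset
  rw [card_sdiff_of_subset h.support_subset, ← card_nbhdIn_univ]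
  rw [h.card_support] at hle ⊢
  omega

/-- The neighbours of `v` in `S` could otherwise be matched, outside the support of `M`, into the
neighbours of `v` in `T`. -/
lemma IsMatchingIn.card_add_card_nbhdIn_lt_of_fanFree (hG : ¬ Contains G (fan m))
    {S T M : Finset W} {g : W → W} (hM : IsMatchingIn G (nbhdIn G T v) M g) (hST : Disjoint S T)
    (h : ∀ y ∈ nbhdIn G S v, m + #M + #(nbhdIn Gᶜ T y) ≤ #(nbhdIn G T v)) :
    #M + #(nbhdIn G S v) < m := by
  by_contra! hm
  have hMm := hM.card_lt_of_fanFree hG fun x hx => (mem_nbhdIn.1 hx).2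
  obtain ⟨Y, hYS, hY⟩ := exists_subset_card_eq (Nat.sub_le_iff_le_add'.2 hm)
  have hYT : ∀ y ∈ Y, y ∉ T := fun y hy => disjoint_left.1 hST (nbhdIn_subset G S v (hYS hy))
  have hlarge : ∀ y ∈ Y, #Y ≤ #(nbhdIn G (nbhdIn G T v) y \ (M ∪ M.image g)) := by
    intro y hy
    have h_common := card_le_card_nbhdIn_add_compl (G := G) (nbhdIn_subset G T v)
      (fun hyT => hYT y hy (nbhdIn_subset G T v hyT))
    have h_sdiff := le_card_sdiff (M ∪ M.image g) (nbhdIn G (nbhdIn G T v) y)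
    rw [hM.card_support] at h_sdiff
    have := h y (hYS hy)
    omega
  have : Nonempty W := ⟨v⟩
  obtain ⟨σ, hσ, hσT⟩ := exists_injOn_forall_mem hlarge
  have hσv : ∀ y ∈ Y, σ y ∈ nbhdIn G T v ∧ G.Adj y (σ y) := fun y hy =>
    mem_nbhdIn.1 (mem_sdiff.1 (hσT y hy)).1
  have hYσ : IsMatchingIn G (Y ∪ nbhdIn G T v) Y σ :=
    { subset := subset_union_left
      partner_mem := fun y hy => mem_union_right _ (hσv y hy).1
      partner_notMem := fun y hy hσy => hYT _ hσy (nbhdIn_subset G T v (hσv y hy).1)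
      adj := fun y hy => (hσv y hy).2
      injOn := hσ }
  have hdisj : Disjoint (M ∪ M.image g) (Y ∪ Y.image σ) := by
    refine disjoint_union_right.2 ⟨disjoint_right.2 fun y hy hyM => ?_, disjoint_right.2 ?_⟩
    · exact hYT y hy (nbhdIn_subset G T v (hM.support_subset hyM))
    · rw [forall_mem_image]
      exact fun y hy => (mem_sdiff.1 (hσT y hy)).2
  have hMY := ((hM.mono subset_union_right).union hYσ hdisj).card_lt_of_fanFree (v := v) hG
    fun x hx => (mem_union.1 hx).elim (fun hx => (mem_nbhdIn.1 (hYS hx)).2)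
      fun hx => (mem_nbhdIn.1 hx).2
  rw [card_union_of_disjoint ((disjoint_union_left.1 hdisj).1.mono_right subset_union_left)]
    at hMY
  omega

lemma card_nbhdIn_lt_of_fanFree (hG : ¬ Contains G (fan m)) {S T : Finset W} (hST : Disjoint S T)
    (h : ∀ y ∈ nbhdIn G S v, m + #(nbhdIn Gᶜ T y) ≤ #(nbhdIn G T v)) :
    #(nbhdIn G S v) < m := by
  have hempty : IsMatchingIn G (nbhdIn G T v) ∅ id := ⟨by simp, by simp, by simp, by simp, by simp⟩
  simpa using hempty.card_add_card_nbhdIn_lt_of_fanFree hG hST (by simpa using h)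

end Fans

section PartialCopies

variable {V W : Type*} {U : SimpleGraph V} {H G : SimpleGraph W} {S T : Finset V}
  {f g : V → W} {K : Finset W}

/-- `f` embeds the subgraph of `U` induced on `S` into `H`; its values outside `S` are
irrelevant. -/
structure IsPartialCopy (U : SimpleGraph V) (H : SimpleGraph W) (S : Finset V) (f : V → W) :
    Prop where
  injOn : Set.InjOn f S
  map_adj : ∀ u ∈ S, ∀ v ∈ S, U.Adj u v → H.Adj (f u) (f v)

namespace IsPartialCopy

lemma contains [Fintype V] (hf : IsPartialCopy U H univ f) : Contains H U :=
  ⟨f, fun _ _ huv => hf.injOn (mem_univ _) (mem_univ _) huv,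
    fun u v => hf.map_adj u (mem_univ u) v (mem_univ v)⟩

lemma congr (hf : IsPartialCopy U H S f) (hfg : ∀ v ∈ S, f v = g v) :
    IsPartialCopy U H S g where
  injOn := hf.injOn.congr hfg
  map_adj u hu v hv huv := hfg u hu ▸ hfg v hv ▸ hf.map_adj u hu v hv huv

lemma of_isIndepSet_source (hS : U.IsIndepSet (S : Set V)) (hf : Set.InjOn f S) :
    IsPartialCopy U H S f where
  injOn := hf
  map_adj _ hu _ hv huv := absurd huv (hS hu hv huv.ne)

lemma of_isIndepSet_target (hK : G.IsIndepSet (K : Set W)) (hf : Set.InjOn f S)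
    (hfK : ∀ v ∈ S, f v ∈ K) : IsPartialCopy U Gᶜ S f where
  injOn := hf
  map_adj u hu v hv huv :=
    compl_adj_of_isIndepSet hK (hfK u hu) (hfK v hv) fun e => huv.ne (hf hu hv e)

lemma glue (hf : IsPartialCopy U H S f) (hg : IsPartialCopy U H T g) (hST : Disjoint S T)
    (hne : ∀ u ∈ S, ∀ v ∈ T, f u ≠ g v)
    (hadj : ∀ u ∈ S, ∀ v ∈ T, U.Adj u v → H.Adj (f u) (g v)) :
    IsPartialCopy U H (S ∪ T) (S.piecewise f g) := by
  have hfS : ∀ v ∈ S, S.piecewise f g v = f v := fun v hv => S.piecewise_eq_of_mem f g hv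
  have hgT : ∀ v ∈ T, S.piecewise f g v = g v := fun v hv =>
    S.piecewise_eq_of_notMem f g (disjoint_right.1 hST hv)
  refine ⟨?_, fun u hu v hv huv => ?_⟩
  · rw [coe_union, Set.injOn_union (disjoint_coe.2 hST)]
    refine ⟨hf.injOn.congr fun v hv => (hfS v hv).symm,
      hg.injOn.congr fun v hv => (hgT v hv).symm, fun u hu v hv => ?_⟩
    rw [hfS u hu, hgT v hv]
    exact hne u hu v hv
  · rcases mem_union.1 hu with hu | hu <;> rcases mem_union.1 hv with hv | hv
    · rw [hfS u hu, hfS v hv]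
      exact hf.map_adj u hu v hv huv
    · rw [hfS u hu, hgT v hv]
      exact hadj u hu v hv huv
    · rw [hgT u hu, hfS v hv]
      exact (hadj v hv u hu huv.symm).symm
    · rw [hgT u hu, hgT v hv]
      exact hg.map_adj u hu v hv huv

lemma update {v : V} {x : W} (hf : IsPartialCopy U H S f) (hv : v ∉ S) (hx : ∀ u ∈ S, f u ≠ x)
    (hadj : ∀ u ∈ S, U.Adj u v → H.Adj (f u) x) :
    IsPartialCopy U H (insert v S) (Function.update f v x) := by
  have hvx : IsPartialCopy U H {v} (fun _ => x) :=
    .of_isIndepSet_source (by simp [SimpleGraph.isIndepSet_iff]) (by simp)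
  have hglue := hf.glue hvx (disjoint_singleton_right.2 hv)
    (fun u hu _ _ => hx u hu) (fun u hu _ hv huv => hadj u hu (mem_singleton.1 hv ▸ huv))
  rw [union_comm, ← insert_eq] at hglue
  refine hglue.congr fun u hu => ?_
  by_cases huS : u ∈ S
  · rw [S.piecewise_eq_of_mem _ _ huS, Function.update_of_ne (ne_of_mem_of_not_mem huS hv)]
  · rw [S.piecewise_eq_of_notMem _ _ huS, (mem_insert.1 hu).resolve_right huS,
      Function.update_self]

lemma exists_insert [Fintype W] {v w : V} (hf : IsPartialCopy U H S f)
    (hv : v ∉ S) (hw : w ∈ S) (hvw : ∀ u ∈ S, U.Adj u v → u = w)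
    (hdeg : #S ≤ H.degree (f w)) : ∃ g, IsPartialCopy U H (insert v S) g := by
  have hcard : #((S.erase w).image f) < #(nbhdIn H univ (f w)) := by
    rw [card_nbhdIn_univ]
    exact card_image_le.trans_lt ((card_erase_lt_of_mem hw).trans_le hdeg)
  obtain ⟨x, hx, hxf⟩ := exists_mem_notMem_of_card_lt_card hcard
  have hwx : H.Adj (f w) x := (mem_nbhdIn.1 hx).2
  refine ⟨_, hf.update hv (x := x) (fun u hu hux => ?_) fun u hu huv => hvw u hu huv ▸ hwx⟩
  by_cases huw : u = w
  · exact hwx.ne (huw ▸ hux)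
  · exact hxf (mem_image.2 ⟨u, mem_erase.2 ⟨huw, hu⟩, hux⟩)

lemma contains_of_isIndepSet [Fintype V] (hf : IsPartialCopy U Gᶜ S f)
    (hK : G.IsIndepSet (K : Set W)) (hfK : ∀ u ∈ S, ∀ v, v ∉ S → U.Adj u v → f u ∈ K)
    (hcard : Fintype.card V ≤ #S + #(K \ S.image f)) : Contains Gᶜ U := by
  rcases isEmpty_or_nonempty V with hV | ⟨⟨v⟩⟩
  · exact ⟨f, fun v => hV.elim v, fun v => hV.elim v⟩
  have : Nonempty W := ⟨f v⟩
  obtain ⟨g, hg, hgK⟩ := exists_injOn_forall_mem (s := Sᶜ) (A := fun _ => K \ S.image f)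
    fun _ _ => by rw [card_compl]; omega
  have hg_mem : ∀ v ∈ Sᶜ, g v ∈ K := fun v hv => (mem_sdiff.1 (hgK v hv)).1
  have hfg : ∀ u ∈ S, ∀ v ∈ Sᶜ, f u ≠ g v := fun u hu v hv e =>
    (mem_sdiff.1 (hgK v hv)).2 (e ▸ mem_image_of_mem f hu)
  have hcopy := hf.glue (.of_isIndepSet_target hK hg hg_mem) disjoint_compl_right hfg
    fun u hu v hv huv => compl_adj_of_isIndepSet hK (hfK u hu v (mem_compl.1 hv) huv)
      (hg_mem v hv) (hfg u hu v hv)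
  rw [union_compl] at hcopy
  exact hcopy.contains

end IsPartialCopy

lemma contains_compl_of_card_le_isIndepSet [Fintype V] (hK : G.IsIndepSet (K : Set W))
    (hcard : Fintype.card V ≤ #K) : Contains Gᶜ U := by
  rcases isEmpty_or_nonempty V with hV | hV
  · exact ⟨isEmptyElim, fun v => hV.elim v, fun v => hV.elim v⟩
  obtain ⟨x, -⟩ := card_pos.1 (Fintype.card_pos.trans_le hcard)
  have hempty : IsPartialCopy U Gᶜ ∅ (fun _ => x) := ⟨by simp, by simp⟩
  exact hempty.contains_of_isIndepSet hK (by simp) (by simpa using hcard)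

lemma contains_compl_of_placement_outside [Fintype V] {P Q : Finset V} {σ τ : V → W}
    (hK : G.IsIndepSet (K : Set W)) (hPQ : Disjoint P Q)
    (hP : ∀ p ∈ P, ∀ v, U.Adj p v → v ∈ Q)
    (hσ : Set.InjOn σ Q) (hσK : ∀ q ∈ Q, σ q ∈ K) (hτ : Set.InjOn τ P) (hτK : ∀ p ∈ P, τ p ∉ K)
    (hadj : ∀ p ∈ P, ∀ q ∈ Q, U.Adj p q → ¬ G.Adj (τ p) (σ q))
    (hcard : Fintype.card V ≤ #K + #P) : Contains Gᶜ U := by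
  have hPi : U.IsIndepSet (P : Set V) := fun p hp v hv _ hpv =>
    disjoint_left.1 hPQ hv (hP p hp v hpv)
  have hne : ∀ p ∈ P, ∀ q ∈ Q, τ p ≠ σ q := fun p hp q hq e => hτK p hp (e ▸ hσK q hq)
  have hcopy := (IsPartialCopy.of_isIndepSet_source hPi hτ).glue
    (.of_isIndepSet_target hK hσ hσK) hPQ hne
    fun p hp q hq hpq => (G.compl_adj _ _).2 ⟨hne p hp q hq, hadj p hp q hq hpq⟩
  have hQ_eq : ∀ q ∈ Q, P.piecewise τ σ q = σ q := fun q hq =>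
    P.piecewise_eq_of_notMem τ σ (disjoint_right.1 hPQ hq)
  refine hcopy.contains_of_isIndepSet hK (fun u hu v hv huv => ?_) ?_
  · rcases mem_union.1 hu with hu | hu
    · exact absurd (mem_union_right P (hP u hu v huv)) hv
    · exact hQ_eq u hu ▸ hσK u hu
  · have hsub : K \ Q.image σ ⊆ K \ (P ∪ Q).image (P.piecewise τ σ) := by
      intro x hx
      obtain ⟨hxK, hxQ⟩ := mem_sdiff.1 hx
      refine mem_sdiff.2 ⟨hxK, fun hx => ?_⟩
      obtain ⟨u, hu, rfl⟩ := mem_image.1 hx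
      rcases mem_union.1 hu with hu | hu
      · exact hτK u hu (P.piecewise_eq_of_mem τ σ hu ▸ hxK)
      · exact hxQ (hQ_eq u hu ▸ mem_image_of_mem σ hu)
    have h_sdiff := le_card_sdiff (Q.image σ) K
    rw [card_image_of_injOn hσ] at h_sdiff
    have h_union := card_union_of_disjoint hPQ
    have h_le := card_le_card hsub
    omega

end PartialCopies

section DegeneracyOrders

variable {V W : Type*} {U : SimpleGraph V} {G : SimpleGraph W}

/-- Every vertex has at most `d` neighbours in any set of vertices of no greater height, so that
adding vertices in the order of increasing height exhibits `U` as `d`-degenerate. -/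
def IsDegeneracyOrder (U : SimpleGraph V) (h : V → ℕ) (d : ℕ) : Prop :=
  ∀ (S : Finset V) (v : V), (∀ u ∈ S, h u ≤ h v) → #(nbhdIn U S v) ≤ d

/-- Embed greedily: each of the at most `d` earlier neighbours forbids at most `D` places. -/
lemma IsDegeneracyOrder.exists_isPartialCopy [Nonempty W] {h : V → ℕ} {d D : ℕ}
    (hU : IsDegeneracyOrder U h d) {R : Finset W} (hR : ∀ x ∈ R, #(nbhdIn G R x) ≤ D)
    {S : Finset V} (hS : #S + d * D ≤ #R) :
    ∃ f : V → W, (∀ v ∈ S, f v ∈ R) ∧ IsPartialCopy U Gᶜ S f := by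
  induction S using Finset.induction_on_max_value h with
  | empty => exact ⟨fun _ => Classical.arbitrary W, by simp, by simp, by simp⟩
  | insert v S hv hmax ih =>
    rw [card_insert_of_notMem hv] at hS
    obtain ⟨f, hfR, hf⟩ := ih (by omega)
    let B := S.image f ∪ (nbhdIn U S v).biUnion fun u => nbhdIn G R (f u)
    have hB : #B < #R := by
      have hforbidden : #((nbhdIn U S v).biUnion fun u => nbhdIn G R (f u)) ≤ d * D :=
        (card_biUnion_le_card_mul _ _ D fun u hu => hR _ (hfR u (mem_nbhdIn.1 hu).1)).trans
          (Nat.mul_le_mul_right D (hU S v hmax))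
      have hunion : #B ≤ _ := card_union_le _ _
      have himage : #(S.image f) ≤ #S := card_image_le
      omega
    obtain ⟨x, hxR, hxB⟩ := exists_mem_notMem_of_card_lt_card hB
    rw [mem_union, not_or] at hxB
    have hfx : ∀ u ∈ S, f u ≠ x := fun u hu e => hxB.1 (e ▸ mem_image_of_mem f hu)
    refine ⟨Function.update f v x, fun u hu => ?_, hf.update hv hfx fun u hu huv => ?_⟩
    · by_cases huv : u = v
      · rwa [huv, Function.update_self]
      · rw [Function.update_of_ne huv]
        exact hfR u ((mem_insert.1 hu).resolve_left huv)
    · refine (G.compl_adj _ _).2 ⟨hfx u hu, fun hux => hxB.2 ?_⟩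
      exact mem_biUnion.2 ⟨u, mem_nbhdIn.2 ⟨hu, huv.symm⟩, mem_nbhdIn.2 ⟨hxR, hux⟩⟩

end DegeneracyOrders

section ParentMaps

variable {V : Type*} {U : SimpleGraph V} {A S : Finset V} {h : V → ℕ} {p : V → V} {r v y : V}

/-- `p` sends every vertex outside `A` to a neighbour one level lower with respect to `h`, so that
the edges from `v ∉ A` to `p v` form a forest hanging from `A`. -/
structure IsParentMap (U : SimpleGraph V) (A : Finset V) (h : V → ℕ) (p : V → V) : Prop where
  adj : ∀ v ∉ A, U.Adj v (p v)
  height : ∀ v ∉ A, h (p v) + 1 = h v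

lemma exists_isParentMap (hU : U.Connected) (hA : A.Nonempty) : ∃ h p, IsParentMap U A h p := by
  let h : V → ℕ := fun v => A.inf' hA (U.dist v)
  have h_le : ∀ v, ∀ a ∈ A, h v ≤ U.dist v a := fun v a ha => inf'_le _ ha
  have h_eq : ∀ v, ∃ a ∈ A, h v = U.dist v a := fun v => exists_mem_eq_inf' hA _
  have key : ∀ v ∉ A, ∃ w, U.Adj v w ∧ h w + 1 = h v := by
    intro v hv
    obtain ⟨a, ha, hva⟩ := h_eq v
    obtain ⟨q, hq⟩ := hU.exists_walk_length_eq_dist v a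
    cases q with
    | nil => exact absurd ha hv
    | @cons _ w _ hadj q =>
      refine ⟨w, hadj, le_antisymm ?_ ?_⟩
      · calc h w + 1 ≤ q.length + 1 := by gcongr; exact (h_le w a ha).trans (SimpleGraph.dist_le q)
          _ = h v := by rw [hva, ← hq, SimpleGraph.Walk.length_cons]
      · obtain ⟨b, hb, hwb⟩ := h_eq w
        calc h v ≤ U.dist v b := h_le v b hb
          _ ≤ U.dist v w + U.dist w b := hU.dist_triangle
          _ = h w + 1 := by rw [SimpleGraph.dist_eq_one_iff_adj.2 hadj, hwb, add_comm]
  choose! p hp using key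
  exact ⟨h, p, fun v hv => (hp v hv).1, fun v hv => (hp v hv).2⟩

variable [Fintype V]

/-- The edges joining each vertex `v ∉ A` to its parent `p v`. -/
noncomputable def parentEdges (A : Finset V) (p : V → V) : Finset (Sym2 V) :=
  Aᶜ.image fun v => s(v, p v)

lemma mk_mem_parentEdges : s(v, y) ∈ parentEdges A p ↔ v ∉ A ∧ p v = y ∨ y ∉ A ∧ p y = v := by
  simp only [parentEdges, mem_image, mem_compl, Sym2.eq_iff]
  constructor
  · rintro ⟨u, hu, ⟨rfl, rfl⟩ | ⟨rfl, rfl⟩⟩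
    exacts [.inl ⟨hu, rfl⟩, .inr ⟨hu, rfl⟩]
  · rintro (⟨hv, rfl⟩ | ⟨hy, rfl⟩)
    exacts [⟨v, hv, .inl ⟨rfl, rfl⟩⟩, ⟨y, hy, .inr ⟨rfl, rfl⟩⟩]

namespace IsParentMap

lemma parentEdges_subset (hp : IsParentMap U A h p) : parentEdges A p ⊆ U.edgeFinset := by
  refine image_subset_iff.2 fun v hv => ?_
  rw [SimpleGraph.mem_edgeFinset, SimpleGraph.mem_edgeSet]
  exact hp.adj v (mem_compl.1 hv)

lemma card_parentEdges (hp : IsParentMap U A h p) :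
    #(parentEdges A p) = Fintype.card V - #A := by
  rw [parentEdges, card_image_of_injOn, card_compl]
  intro v hv w hw hvw
  have hv_height := hp.height v (by simpa using hv)
  have hw_height := hp.height w (by simpa using hw)
  rcases Sym2.eq_iff.1 hvw with ⟨h_eq, _⟩ | ⟨h_eq, h_eq'⟩
  · exact h_eq
  · rw [← h_eq] at hw_height
    rw [h_eq'] at hv_height
    omega

lemma eq_parent_of_height_le (hp : IsParentMap U A h p) (hvy : s(v, y) ∈ parentEdges A p)
    (hle : h y ≤ h v) : v ∉ A ∧ p v = y := by
  refine (mk_mem_parentEdges.1 hvy).resolve_right ?_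
  rintro ⟨hy, rfl⟩
  have := hp.height y hy
  omega

end IsParentMap

end ParentMaps

section UnicyclicGraphs

variable {V : Type*} [Fintype V] {U : SimpleGraph V} {A : Finset V} {h : V → ℕ} {p : V → V}

/-- A connected graph with as many edges as vertices. -/
structure IsUnicyclic (U : SimpleGraph V) : Prop where
  connected : U.Connected
  ncard_edgeSet : U.edgeSet.ncard = Fintype.card V

namespace IsUnicyclic

lemma card_edgeFinset (hU : IsUnicyclic U) : #U.edgeFinset = Fintype.card V := by
  rw [← hU.ncard_edgeSet, ← SimpleGraph.coe_edgeFinset, Set.ncard_coe_finset]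

lemma exists_extra_edge (hU : IsUnicyclic U) {r : V} (hp : IsParentMap U {r} h p) :
    ∃ a b, ∀ x y, U.Adj x y → s(x, y) ∈ parentEdges {r} p ∨ s(x, y) = s(a, b) := by
  have : Nonempty V := ⟨r⟩
  have hcard : #(U.edgeFinset \ parentEdges {r} p) = 1 := by
    have := Fintype.card_pos (α := V)
    rw [card_sdiff_of_subset hp.parentEdges_subset, hp.card_parentEdges, hU.card_edgeFinset,
      card_singleton]
    omega
  obtain ⟨e, he⟩ := card_eq_one.1 hcard
  induction e using Sym2.ind with
  | _ a b =>
    refine ⟨a, b, fun x y hxy => or_iff_not_imp_left.2 fun hxy' => ?_⟩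
    rw [← mem_singleton, ← he, mem_sdiff, SimpleGraph.mem_edgeFinset, SimpleGraph.mem_edgeSet]
    exact ⟨hxy, hxy'⟩

lemma exists_contains_cycleGraph (hU : IsUnicyclic U) :
    ∃ k ≥ 3, Contains U (SimpleGraph.cycleGraph k) := by
  have hnot : ¬ U.IsAcyclic := fun hacyclic => by
    have := (SimpleGraph.IsTree.mk hU.connected hacyclic).card_edgeFinset
    rw [hU.card_edgeFinset] at this
    omega
  rw [SimpleGraph.isAcyclic_iff_free_cycleGraph] at hnot
  push Not at hnot
  obtain ⟨k, hk, ⟨c⟩⟩ := hnot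
  exact ⟨k, hk, c, c.injective, fun i j hij => c.toHom.map_adj hij⟩

end IsUnicyclic

lemma card_edgeFinset_cycleGraph {k : ℕ} (hk : 3 ≤ k) :
    #(SimpleGraph.cycleGraph k).edgeFinset = k := by
  obtain ⟨k, rfl⟩ := Nat.exists_eq_add_of_le' hk
  have hsum := (SimpleGraph.cycleGraph (k + 3)).sum_degrees_eq_twice_card_edges
  have hdegree : ∀ i, (SimpleGraph.cycleGraph (k + 3)).degree i = 2 := fun i => by
    convert SimpleGraph.cycleGraph_degree_three_le (v := i)
  simp only [hdegree, sum_const, card_univ, Fintype.card_fin, smul_eq_mul] at hsum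
  omega

lemma IsUnicyclic.edgeFinset_eq (hU : IsUnicyclic U) {k : ℕ} (hk : 3 ≤ k) (c : Fin k ↪ V)
    (hc : (SimpleGraph.cycleGraph k).map c ≤ U) (hp : IsParentMap U (univ.map c) h p) :
    U.edgeFinset = ((SimpleGraph.cycleGraph k).map c).edgeFinset ∪ parentEdges (univ.map c) p := by
  have hdisj : Disjoint ((SimpleGraph.cycleGraph k).map c).edgeFinset
      (parentEdges (univ.map c) p) := by
    rw [disjoint_left]
    intro e he hep
    induction e using Sym2.ind with
    | _ x y =>
      rw [SimpleGraph.mem_edgeFinset, SimpleGraph.mem_edgeSet, SimpleGraph.map_adj] at he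
      obtain ⟨i, j, -, rfl, rfl⟩ := he
      rcases mk_mem_parentEdges.1 hep with ⟨hi, -⟩ | ⟨hj, -⟩
      exacts [hi (mem_map_of_mem c (mem_univ i)), hj (mem_map_of_mem c (mem_univ j))]
  refine (eq_of_subset_of_card_le (union_subset (SimpleGraph.edgeFinset_mono hc)
    hp.parentEdges_subset) ?_).symm
  have hmap : #((SimpleGraph.cycleGraph k).map c).edgeFinset = k := by
    refine Eq.trans ?_ ((SimpleGraph.card_edgeFinset_map c _).trans (card_edgeFinset_cycleGraph hk))
    congr!
  have hk_le := card_le_univ (univ.map c)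
  rw [card_union_of_disjoint hdisj, hp.card_parentEdges, hU.card_edgeFinset, hmap]
  rw [card_map, card_univ, Fintype.card_fin] at hk_le ⊢
  omega

lemma IsUnicyclic.isDegeneracyOrder (hU : IsUnicyclic U) {r : V} (hp : IsParentMap U {r} h p) :
    IsDegeneracyOrder U h 2 := by
  obtain ⟨a, b, hab⟩ := hU.exists_extra_edge hp
  intro S v hS
  have hsub : nbhdIn U S v ⊆ {p v, if v = a then b else a} := by
    intro y hy
    obtain ⟨hyS, hvy⟩ := mem_nbhdIn.1 hy
    rw [mem_insert, mem_singleton]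
    rcases hab v y hvy with h_parent | h_extra
    · exact .inl (hp.eq_parent_of_height_le h_parent (hS y hyS)).2.symm
    · right
      rcases Sym2.eq_iff.1 h_extra with ⟨rfl, rfl⟩ | ⟨rfl, rfl⟩
      exacts [(if_pos rfl).symm, (if_neg hvy.ne).symm]
  exact (card_le_card hsub).trans card_le_two

section GreedyExtension

variable {W : Type*} [Fintype W] {H : SimpleGraph W} {f : V → W}

lemma IsParentMap.contains_of_isPartialCopy (hp : IsParentMap U A h p)
    (hedges : ∀ v ∉ A, ∀ y, U.Adj v y → s(v, y) ∈ parentEdges A p)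
    (hf : IsPartialCopy U H A f) (hdeg : ∀ x, Fintype.card V ≤ H.degree x + 1) :
    Contains H U := by
  suffices hext : ∀ T ⊆ Aᶜ, (∀ v ∈ T, p v ∈ A ∪ T) → ∃ g, IsPartialCopy U H (A ∪ T) g by
    obtain ⟨g, hg⟩ := hext Aᶜ Subset.rfl fun v _ => by rw [union_compl]; exact mem_univ _
    rw [union_compl] at hg
    exact hg.contains
  intro T hTA hT
  induction T using Finset.induction_on_max_value h with
  | empty => exact ⟨f, by rwa [union_empty]⟩
  | insert v T hvT hmax ih =>
    obtain ⟨hvA, hTA⟩ := insert_subset_iff.1 hTA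
    rw [mem_compl] at hvA
    have hparent : ∀ u ∈ insert v T, p u ∈ A ∪ T := by
      intro u hu
      have hle : h u ≤ h v := (mem_insert.1 hu).elim (fun e => e ▸ le_rfl) (hmax u)
      have huA : u ∉ A := (mem_insert.1 hu).elim (fun e => e ▸ hvA) fun hu => mem_compl.1 (hTA hu)
      have hpu : p u ≠ v := fun e => by have := hp.height u huA; rw [e] at this; omega
      have hmem := hT u hu
      rw [union_insert] at hmem
      exact (mem_insert.1 hmem).resolve_left hpu
    obtain ⟨g, hg⟩ := ih hTA fun u hu => hparent u (mem_insert_of_mem hu)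
    have hv : v ∉ A ∪ T := by simp only [mem_union, hvA, hvT, or_self, not_false_eq_true]
    rw [union_insert]
    refine hg.exists_insert hv (hparent v (mem_insert_self v T)) (fun u hu huv => ?_) ?_
    · have hmem := hedges v hvA u huv.symm
      rcases mem_union.1 hu with hu | hu
      · exact ((mk_mem_parentEdges.1 hmem).resolve_right fun h => h.1 hu).2.symm
      · exact (hp.eq_parent_of_height_le hmem (hmax u hu)).2.symm
    · have hlt : #(A ∪ T) < Fintype.card V := card_lt_univ_of_notMem hv
      have := hdeg (g (p v))
      omega

lemma IsUnicyclic.contains_of_forall_le_degree (hU : IsUnicyclic U)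
    (hdeg : ∀ x, Fintype.card V ≤ H.degree x + 1)
    (hcycle : ∀ k, 3 ≤ k → k ≤ Fintype.card V → Contains H (SimpleGraph.cycleGraph k)) :
    Contains H U := by
  obtain ⟨k, hk, c, hc_inj, hc⟩ := hU.exists_contains_cycleGraph
  lift c to Fin k ↪ V using hc_inj
  have hk_le : k ≤ Fintype.card V := by
    simpa only [Fintype.card_fin] using Fintype.card_le_of_embedding c
  obtain ⟨d, hd_inj, hd⟩ := hcycle k hk hk_le
  have hne : (univ.map c).Nonempty := ⟨c ⟨0, by omega⟩, mem_map_of_mem c (mem_univ _)⟩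
  obtain ⟨h, p, hp⟩ := exists_isParentMap hU.connected hne
  have hle : (SimpleGraph.cycleGraph k).map c ≤ U :=
    (SimpleGraph.map_le_iff_le_comap c _ _).2 fun i j hij => hc hij
  have hedges := hU.edgeFinset_eq hk c hle hp
  have hadj : ∀ x y, U.Adj x y → s(x, y) ∈ parentEdges (univ.map c) p ∨
      ∃ i j, (SimpleGraph.cycleGraph k).Adj i j ∧ c i = x ∧ c j = y := by
    intro x y hxy
    rw [← SimpleGraph.mem_edgeSet, ← SimpleGraph.mem_edgeFinset, hedges, mem_union,
      SimpleGraph.mem_edgeFinset, SimpleGraph.mem_edgeSet, SimpleGraph.map_adj] at hxy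
    exact hxy.symm
  have : Nonempty W := ⟨d ⟨0, by omega⟩⟩
  have hf : ∀ i, Function.extend c d (fun _ => Classical.arbitrary W) (c i) = d i :=
    fun i => c.injective.extend_apply d _ i
  refine hp.contains_of_isPartialCopy (f := Function.extend c d fun _ => Classical.arbitrary W)
    (fun v hv y hvy => ?_) ⟨?_, ?_⟩ hdeg
  · refine (hadj v y hvy).resolve_right ?_
    rintro ⟨i, -, -, rfl, -⟩
    exact hv (mem_map_of_mem c (mem_univ i))
  · rw [coe_map, coe_univ, Set.image_univ]
    rintro _ ⟨i, rfl⟩ _ ⟨j, rfl⟩ hij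
    rw [hf, hf] at hij
    rw [hd_inj hij]
  · intro x hx y hy hxy
    rcases hadj x y hxy with h_parent | ⟨i, j, hij, rfl, rfl⟩
    · rcases mk_mem_parentEdges.1 h_parent with ⟨hx', -⟩ | ⟨hy', -⟩
      exacts [absurd hx hx', absurd hy hy']
    · rw [hf, hf]
      exact hd hij

end GreedyExtension

end UnicyclicGraphs

section Cycles

variable {W : Type*} {G H : SimpleGraph W} {C O : Finset W} {z : W} {m : ℕ}

lemma contains_fan_of_isClique {K : Finset W} (hK : G.IsClique (K : Set W))
    (hm : 2 * m + 1 ≤ #K) : Contains G (fan m) := by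
  obtain ⟨v, hv⟩ := card_pos.1 (show 0 < #K by omega)
  obtain ⟨e⟩ : Nonempty (Fin m × Bool ↪ K.erase v) := by
    refine Function.Embedding.nonempty_of_card_le ?_
    rw [Fintype.card_prod, Fintype.card_fin, Fintype.card_bool, Fintype.card_coe,
      card_erase_of_mem hv]
    omega
  have he : ∀ y, (e y : W) ≠ v ∧ (e y : W) ∈ K := fun y => mem_erase.1 (e y).2
  refine contains_fan_of_triangles (v := v) (Subtype.val_injective.comp e.injective)
    (fun y => hK hv (he y).2 (he y).1.symm) fun i => hK (he _).2 (he _).2 fun hi => ?_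
  simpa using e.injective (Subtype.ext hi)

lemma pos_of_fanFree [Nonempty W] (hG : ¬ Contains G (fan m)) : 0 < m := by
  obtain ⟨x⟩ := ‹Nonempty W›
  refine Nat.pos_of_ne_zero fun hm => hG (contains_fan_of_isClique (K := {x}) ?_ ?_)
  · rw [coe_singleton]
    exact SimpleGraph.isClique_singleton x
  · rw [card_singleton, hm]

/-- `H` has a cycle with vertex set `C`, given as a cyclic list; this allows `C` to be empty or a
single edge. -/
def HasCycleOn (H : SimpleGraph W) (C : Finset W) : Prop :=
  ∃ c : Cycle W, c.Nodup ∧ c.Chain H.Adj ∧ c.toFinset = C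

lemma HasCycleOn.contains_cycleGraph (h : HasCycleOn H C) :
    Contains H (SimpleGraph.cycleGraph #C) := by
  obtain ⟨c, hnodup, hchain, rfl⟩ := h
  induction c using Quotient.inductionOn with
  | _ l =>
  change l.Nodup at hnodup
  change Cycle.Chain H.Adj (l : Cycle W) at hchain
  change Contains H (SimpleGraph.cycleGraph #l.toFinset)
  rw [List.toFinset_card_of_nodup hnodup]
  have hsucc : ∀ i j : Fin l.length, (j - i).val = 1 → H.Adj l[i] l[j] := by
    intro i j hij
    obtain _ | ⟨a, t⟩ := l
    · exact i.elim0
    have hnext := List.isChain_iff_getElem.1 ((Cycle.chain_coe_cons _ a t).1 hchain) i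
      (by simpa using i.2)
    rcases le_or_gt i j with hle | hlt
    · have hj : (j : ℕ) = i + 1 := by have := Fin.sub_val_of_le hle; omega
      grind
    · have := Fin.coe_sub_iff_lt.2 hlt
      grind
  refine ⟨fun i => l[i], fun i j hij => Fin.ext ((hnodup.getElem_inj_iff).1 hij), fun i j hij => ?_⟩
  rcases SimpleGraph.cycleGraph_adj'.1 hij with h | h
  exacts [(hsucc j i h).symm, hsucc i j h]

lemma hasCycleOn_of_isPartialCopy {k : ℕ} (hk : 3 ≤ k) {f : Fin k → W}
    (hf : IsPartialCopy (SimpleGraph.cycleGraph k) H univ f) : HasCycleOn H (univ.image f) := by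
  obtain ⟨k, rfl⟩ := Nat.exists_eq_add_of_le' hk
  have hinj : Function.Injective f := fun i j hij => hf.injOn (mem_univ i) (mem_univ j) hij
  have hadj : ∀ i, H.Adj (f i) (f (i + 1)) := fun i =>
    hf.map_adj _ (mem_univ _) _ (mem_univ _) (by rw [SimpleGraph.cycleGraph_adj']; right; simp)
  refine ⟨List.ofFn f, List.nodup_ofFn.2 hinj, ?_, ?_⟩
  · rw [List.ofFn_succ, Cycle.chain_coe_cons, ← List.cons_append, ← List.ofFn_succ,
      List.isChain_append, List.isChain_ofFn]
    refine ⟨fun i hi => ?_, List.isChain_singleton _, ?_⟩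
    · convert hadj ⟨i, by omega⟩
      exact (Fin.val_add_one_of_lt' (i := ⟨i, _⟩) hi).symm
    · have hlast := hadj (Fin.last (k + 2))
      rw [Fin.last_add_one] at hlast
      have hne : List.ofFn f ≠ [] := by simp
      simp only [List.getLast?_eq_some_getLast hne, List.getLast_ofFn, List.head?_cons,
        Option.mem_some_iff, forall_eq']
      exact hlast
  · ext x
    simp only [Cycle.coe_toFinset, List.mem_toFinset, List.mem_ofFn, mem_image, mem_univ, true_and]

lemma exists_hasCycleOn_of_contains {k : ℕ} (hk : 3 ≤ k)
    (h : Contains H (SimpleGraph.cycleGraph k)) : ∃ C, #C = k ∧ HasCycleOn H C := by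
  obtain ⟨f, hf_inj, hf⟩ := h
  refine ⟨univ.image f, ?_, hasCycleOn_of_isPartialCopy hk
    ⟨hf_inj.injOn, fun _ _ _ _ hadj => hf hadj⟩⟩
  rw [card_image_of_injective _ hf_inj, card_univ, Fintype.card_fin]

lemma isChain_cons_reverse_append {A B : List W} (h : (A ++ B).IsChain H.Adj)
    (hz : ∀ b ∈ A.getLast?, H.Adj z b) (hA : A ≠ [])
    (hAB : ∀ a ∈ A.head?, ∀ b ∈ B.head?, H.Adj a b) :
    (z :: (A.reverse ++ B)).IsChain H.Adj := by
  rw [List.isChain_append] at h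
  rw [List.isChain_cons, List.isChain_append, List.isChain_reverse, List.getLast?_reverse]
  refine ⟨fun b hb => hz b ?_, h.1.imp fun _ _ hab => hab.symm, h.2.1, hAB⟩
  rwa [List.head?_append_of_ne_nil _ (List.reverse_ne_nil_iff.2 hA), List.head?_reverse] at hb

lemma exists_coe_eq_cons_cons {c : Cycle W} (hc : c.Chain H.Adj) {x : W} (hx : x ∈ c) :
    ∃ y l, c = ((x :: y :: l : List W) : Cycle W) := by
  induction c using Quotient.inductionOn with
  | _ l =>
  obtain ⟨A, B, rfl⟩ := List.append_of_mem (Cycle.mem_coe_iff.1 hx)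
  have hrot : ((A ++ x :: B : List W) : Cycle W) = (x :: (B ++ A) : List W) :=
    Cycle.coe_eq_coe.2 List.isRotated_append
  change Cycle.Chain _ ((A ++ x :: B : List W) : Cycle W) at hc
  rw [hrot] at hc
  cases hBA : B ++ A with
  | nil => rw [hBA] at hc; simp at hc
  | cons y l => exact ⟨y, l, by rw [← hBA]; exact hrot⟩

lemma exists_successor {c : Cycle W} (hc : c.Nodup) :
    ∃ s : W → W, Set.InjOn s c.toFinset ∧
      ∀ x y l, c = ((x :: y :: l : List W) : Cycle W) → s x = y := by
  refine ⟨fun x => if hx : x ∈ c then c.next hc x hx else x, ?_, ?_⟩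
  · intro x hx y hy hxy
    have hmem : ∀ {x}, x ∈ c.toFinset → x ∈ c := fun hx => by
      induction c using Quotient.inductionOn with
      | _ l => exact List.mem_toFinset.1 hx
    have hx' := hmem hx
    have hy' := hmem hy
    simp only [hx', hy', dif_pos] at hxy
    rw [← c.prev_next hc x hx', ← c.prev_next hc y hy']
    simp only [hxy]
  · rintro x y l rfl
    have hx : x ∈ ((x :: y :: l : List W) : Cycle W) := List.mem_cons_self
    simp only [hx, dif_pos]
    exact List.next_cons_cons_eq l x y hx

lemma mem_cycle_toFinset {c : Cycle W} {x : W} : x ∈ c.toFinset ↔ x ∈ c := by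
  induction c using Quotient.inductionOn with
  | _ l => exact List.mem_toFinset

section Insertion

variable {c : Cycle W} {s : W → W} {x x₁ x₂ : W}

lemma hasCycleOn_insert_of_adj_consecutive (hc : c.Nodup) (hchain : c.Chain H.Adj)
    (hs : ∀ x y l, c = ((x :: y :: l : List W) : Cycle W) → s x = y) (hx : x ∈ c) (hz : z ∉ c)
    (hzx : H.Adj z x) (hzs : H.Adj z (s x)) : HasCycleOn H (insert z c.toFinset) := by
  obtain ⟨y, l, rfl⟩ := exists_coe_eq_cons_cons hchain hx
  rw [hs x y l rfl] at hzs
  rw [Cycle.mem_coe_iff] at hz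
  rw [Cycle.chain_coe_cons, List.cons_append, List.isChain_cons_cons] at hchain
  rw [Cycle.nodup_coe_iff] at hc
  refine ⟨(x :: z :: y :: l : List W), ?_, ?_, ?_⟩
  · rw [Cycle.nodup_coe_iff]; grind
  · rw [Cycle.chain_coe_cons]
    exact (hchain.2.cons_cons hzs).cons_cons hzx.symm
  · ext w; simp; tauto

lemma hasCycleOn_insert_of_adj_successors (hc : c.Nodup) (hchain : c.Chain H.Adj)
    (hs : ∀ x y l, c = ((x :: y :: l : List W) : Cycle W) → s x = y)
    (hx₁ : x₁ ∈ c) (hx₂ : x₂ ∈ c) (hne : x₂ ≠ x₁) (hz : z ∉ c)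
    (hzx₁ : H.Adj z x₁) (hzx₂ : H.Adj z x₂) (hss : H.Adj (s x₁) (s x₂)) :
    HasCycleOn H (insert z c.toFinset) := by
  obtain ⟨y₁, l, hc₁⟩ := exists_coe_eq_cons_cons hchain hx₁
  have hmem : x₂ ∈ y₁ :: l := by
    rw [hc₁, Cycle.mem_coe_iff] at hx₂
    exact (List.mem_cons.1 hx₂).resolve_left hne
  obtain ⟨A, B, hAB⟩ := List.append_of_mem hmem
  have hc₂ : c = (x₂ :: (B ++ x₁ :: A) : List W) := by
    rw [hc₁, hAB, Cycle.coe_eq_coe]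
    simpa using List.isRotated_append (l := x₁ :: A) (l' := x₂ :: B)
  obtain ⟨y₂, hy₂⟩ : ∃ y₂, (B ++ [x₁]).head? = some y₂ ∧ s x₂ = y₂ := by
    cases B with
    | nil => exact ⟨x₁, rfl, hs _ _ _ hc₂⟩
    | cons y B => exact ⟨y, rfl, hs _ _ _ hc₂⟩
  rw [hs _ _ _ hc₁, hy₂.2] at hss
  subst hc₁
  rw [Cycle.mem_coe_iff] at hz
  rw [Cycle.chain_coe_cons] at hchain
  rw [Cycle.nodup_coe_iff] at hc
  refine ⟨(x₁ :: z :: ((A ++ [x₂]).reverse ++ B) : List W), ?_, ?_, ?_⟩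
  · have hperm : List.Perm ((A ++ [x₂]).reverse ++ B) (y₁ :: l) := by
      simpa [hAB] using (A ++ [x₂]).reverse_perm.append_right B
    rw [Cycle.nodup_coe_iff, ((hperm.cons z).cons x₁).nodup_iff, (List.Perm.swap z x₁ _).nodup_iff]
    exact List.nodup_cons.2 ⟨hz, hc⟩
  · have hpath : ((A ++ [x₂]) ++ (B ++ [x₁])).IsChain H.Adj := by
      rw [hAB] at hchain
      simpa using hchain.tail
    rw [Cycle.chain_coe_cons, List.cons_append, List.append_assoc]
    refine (isChain_cons_reverse_append hpath ?_ ?_ ?_).cons_cons hzx₁.symm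
    · simpa
    · simp
    · have hy₁ : (A ++ [x₂]).head? = some y₁ := by
        cases A <;> simp_all
      rw [hy₁, hy₂.1]
      simpa
  · ext w; rw [hAB]; simp; tauto

end Insertion

lemma HasCycleOn.insert_of_fanFree (hG : ¬ Contains G (fan m)) (hC : HasCycleOn Gᶜ C)
    (hz : z ∉ C) (hm : 2 * m ≤ #(nbhdIn Gᶜ C z)) : HasCycleOn Gᶜ (insert z C) := by
  by_contra hno
  obtain ⟨c, hnodup, hchain, rfl⟩ := hC
  obtain ⟨s, hinj, hs⟩ := exists_successor hnodup
  rw [mem_cycle_toFinset] at hz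
  set D := nbhdIn Gᶜ c.toFinset z with hD
  have hmemD : ∀ x ∈ D, x ∈ c ∧ Gᶜ.Adj z x := fun x hx => by
    rwa [hD, mem_nbhdIn, mem_cycle_toFinset] at hx
  have hsc : ∀ x ∈ D, s x ∈ c := fun x hx => by
    obtain ⟨y, l, rfl⟩ := exists_coe_eq_cons_cons hchain (hmemD x hx).1
    simp [hs x y l rfl]
  have hadj : ∀ {x y}, x ≠ y → ¬ Gᶜ.Adj x y → G.Adj x y := fun hxy h => by
    by_contra h'; exact h ((SimpleGraph.compl_adj _ _ _).2 ⟨hxy, h'⟩)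
  have hclique : G.IsClique (insert z (D.image s) : Finset W) := by
    rw [coe_insert, SimpleGraph.isClique_insert, coe_image]
    refine ⟨?_, ?_⟩
    · rintro _ ⟨x₁, hx₁, rfl⟩ _ ⟨x₂, hx₂, rfl⟩ hne
      refine hadj hne fun h => hno ?_
      exact hasCycleOn_insert_of_adj_successors hnodup hchain hs (hmemD x₁ hx₁).1 (hmemD x₂ hx₂).1
        (fun h => hne (h ▸ rfl)) hz (hmemD x₁ hx₁).2 (hmemD x₂ hx₂).2 h
    · rintro _ ⟨x, hx, rfl⟩ hne
      refine hadj hne fun h => hno ?_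
      exact hasCycleOn_insert_of_adj_consecutive hnodup hchain hs (hmemD x hx).1 hz (hmemD x hx).2 h
  refine hG (contains_fan_of_isClique hclique ?_)
  have hzD : z ∉ D.image s := fun h => by
    obtain ⟨x, hx, rfl⟩ := mem_image.1 h
    exact hz (hsc x hx)
  rw [card_insert_of_notMem hzD, card_image_of_injOn (hinj.mono (nbhdIn_subset _ _ _))]
  exact Nat.succ_le_succ hm

lemma isDegeneracyOrder_cycleGraph {k : ℕ} (hk : 2 ≤ k) (h : Fin k → ℕ) :
    IsDegeneracyOrder (SimpleGraph.cycleGraph k) h 2 := by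
  obtain ⟨k, rfl⟩ := Nat.exists_eq_add_of_le' hk
  intro S v _
  refine (card_nbhdIn_mono (subset_univ S) v).trans ?_
  have hdeg : #(nbhdIn (SimpleGraph.cycleGraph (k + 2)) univ v) = #{v - 1, v + 1} := by
    rw [card_nbhdIn_univ]
    convert SimpleGraph.cycleGraph_degree_two_le
  exact hdeg ▸ card_le_two

/-- Short cycles are found greedily; longer ones are then obtained by inserting one vertex at a
time. -/
lemma exists_hasCycleOn_compl_of_sparse (hG : ¬ Contains G (fan m))
    (hO : ∀ z ∈ O, #(nbhdIn G O z) < 4 * m) (hcard : 14 * m ≤ #O) {k : ℕ}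
    (hk₃ : 3 ≤ k) (hk : k ≤ #O) : ∃ C ⊆ O, #C = k ∧ HasCycleOn Gᶜ C := by
  obtain ⟨x, hx⟩ := card_pos.1 (show 0 < #O by omega)
  have hmpos := hO x hx
  have greedy : ∀ k, 3 ≤ k → k ≤ 6 * m → ∃ C ⊆ O, #C = k ∧ HasCycleOn Gᶜ C := by
    intro k hk₃ hk
    have : Nonempty W := ⟨x⟩
    obtain ⟨f, hfO, hf⟩ := (isDegeneracyOrder_cycleGraph (show 2 ≤ k by omega)
      fun _ => 0).exists_isPartialCopy (G := G) (R := O) (S := univ) (D := 4 * m - 1)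
      (fun z hz => Nat.le_sub_one_of_lt (hO z hz)) (by rw [card_univ, Fintype.card_fin]; omega)
    refine ⟨univ.image f, image_subset_iff.2 fun i hi => hfO i hi, ?_,
      hasCycleOn_of_isPartialCopy hk₃ hf⟩
    rw [card_image_of_injOn (by simpa using hf.injOn), card_univ, Fintype.card_fin]
  induction k, hk₃ using Nat.le_induction with
  | base => exact greedy 3 le_rfl (by omega)
  | succ k hk₃ ih =>
    rcases le_or_gt (k + 1) (6 * m) with hkm | hkm
    · exact greedy (k + 1) (by omega) hkm
    obtain ⟨C, hCO, hCk, hC⟩ := ih (by omega)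
    obtain ⟨z, hzO, hzC⟩ := exists_mem_notMem_of_card_lt_card (show #C < #O by omega)
    refine ⟨insert z C, insert_subset hzO hCO, by rw [card_insert_of_notMem hzC, hCk],
      hC.insert_of_fanFree hG hzC ?_⟩
    have hsum := card_nbhdIn_add_compl_of_notMem (G := G) hzC
    have hmono := card_nbhdIn_mono (G := G) hCO z
    have hsparse := hO z hzO
    omega

section Pancyclic

variable [Fintype W] {n : ℕ}

lemma contains_compl_cycleGraph_of_le_degree (hG : ¬ Contains G (fan m)) {k : ℕ} {v : W}
    (hv : k + 2 * m ≤ G.degree v + 2) : Contains Gᶜ (SimpleGraph.cycleGraph k) := by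
  obtain ⟨K, -, hK, hcard⟩ := exists_isIndepSet_of_fanFree hG v
  exact contains_compl_of_card_le_isIndepSet hK (by rw [Fintype.card_fin]; omega)

/-- The inductive cycle is either extended, or its complement is so sparse in `G` that a longer
cycle can be found there from scratch. -/
lemma contains_compl_cycleGraph_of_fanFree (hG : ¬ Contains G (fan m)) (hn : 14 * m ≤ n)
    (hW : 2 * n ≤ Fintype.card W + 1) {k : ℕ} (hk₃ : 3 ≤ k) (hk : k ≤ n) :
    Contains Gᶜ (SimpleGraph.cycleGraph k) := by
  induction k, hk₃ using Nat.le_induction with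
  | base =>
    by_contra hno
    have hdeg : ∀ v, G.degree v + 2 < 3 + 2 * m := fun v =>
      lt_of_not_ge fun hv => hno (contains_compl_cycleGraph_of_le_degree hG hv)
    obtain ⟨C, -, hCk, hC⟩ := exists_hasCycleOn_compl_of_sparse (O := univ) hG (fun z _ => by
      have : Nonempty W := ⟨z⟩
      have := pos_of_fanFree hG
      have := hdeg z
      rw [card_nbhdIn_univ]
      omega) (by rw [card_univ]; omega) le_rfl (by rw [card_univ]; omega)
    exact hno (hCk ▸ hC.contains_cycleGraph)
  | succ k hk₃ ih =>
    by_contra hno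
    have hdeg : ∀ v, G.degree v + 2 < k + 1 + 2 * m := fun v =>
      lt_of_not_ge fun hv => hno (contains_compl_cycleGraph_of_le_degree hG hv)
    obtain ⟨C, hCk, hC⟩ := exists_hasCycleOn_of_contains hk₃ (ih (by omega))
    have hnbhd : ∀ z ∈ Cᶜ, #(nbhdIn Gᶜ C z) < 2 * m := fun z hz => lt_of_not_ge fun hle => by
      have hins := (hC.insert_of_fanFree hG (mem_compl.1 hz) hle).contains_cycleGraph
      rw [card_insert_of_notMem (mem_compl.1 hz), hCk] at hins
      exact hno hins
    have hsparse : ∀ z ∈ Cᶜ, #(nbhdIn G Cᶜ z) < 4 * m := fun z hz => by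
      have hsum := card_nbhdIn_add_compl_of_notMem (G := G) (mem_compl.1 hz)
      have hsplit := card_nbhdIn_union (G := G) (disjoint_compl_right (a := C)) z
      rw [union_compl, card_nbhdIn_univ] at hsplit
      have := hdeg z
      have := hnbhd z hz
      omega
    have hcard : #Cᶜ = Fintype.card W - k := by rw [card_compl, hCk]
    obtain ⟨C', -, hC'k, hC'⟩ := exists_hasCycleOn_compl_of_sparse hG hsparse
      (k := k + 1) (by omega) (by omega) (by omega)
    exact hno (hC'k ▸ hC'.contains_cycleGraph)

end Pancyclic
end Cycles

section Leaves

variable {V : Type*} [Fintype V] {U : SimpleGraph V} {u v w : V}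

/-- The vertices of degree one. -/
noncomputable def leaves (U : SimpleGraph V) : Finset V := univ.filter fun v => U.degree v = 1

lemma mem_leaves : v ∈ leaves U ↔ U.degree v = 1 := by
  simp [leaves]

lemma eq_of_mem_leaves (hv : v ∈ leaves U) (hu : U.Adj v u) (hw : U.Adj v w) : u = w :=
  (SimpleGraph.degree_eq_one_iff_existsUnique_adj.1 (mem_leaves.1 hv)).unique hu hw

namespace IsUnicyclic

lemma three_le_card (hU : IsUnicyclic U) : 3 ≤ Fintype.card V := by
  have hpos : 0 < Fintype.card V := Fintype.card_pos_iff.2 hU.connected.nonempty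
  have hle := SimpleGraph.card_edgeFinset_le_card_choose_two (G := U)
  rw [hU.card_edgeFinset] at hle
  by_contra! hlt
  interval_cases Fintype.card V <;> simp at hle

lemma degree_pos (hU : IsUnicyclic U) (v : V) : 0 < U.degree v := by
  have : Nontrivial V := Fintype.one_lt_card_iff_nontrivial.1 (by have := hU.three_le_card; omega)
  exact hU.connected.preconnected.degree_pos_of_nontrivial v

lemma sum_degree (hU : IsUnicyclic U) : ∑ v, U.degree v = 2 * Fintype.card V := by
  rw [U.sum_degrees_eq_twice_card_edges, hU.card_edgeFinset]

lemma sum_degree_sub_two (hU : IsUnicyclic U) :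
    ∑ v with 3 ≤ U.degree v, (U.degree v - 2) = #(leaves U) := by
  have hpoint : ∀ v, U.degree v + (if U.degree v = 1 then 1 else 0) =
      2 + (if 3 ≤ U.degree v then U.degree v - 2 else 0) := by
    intro v
    have := hU.degree_pos v
    split_ifs <;> omega
  have hsum := sum_congr (rfl : (univ : Finset V) = univ) fun v _ => hpoint v
  simp only [sum_add_distrib, hU.sum_degree, ← sum_filter, sum_const, card_univ, smul_eq_mul,
    mul_one] at hsum
  rw [leaves]
  omega

lemma degree_le (hU : IsUnicyclic U) (v : V) : U.degree v ≤ #(leaves U) + 2 := by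
  by_cases hv : 3 ≤ U.degree v
  · rw [← hU.sum_degree_sub_two, ← Nat.sub_le_iff_le_add]
    exact single_le_sum (f := fun v => U.degree v - 2) (fun _ _ => Nat.zero_le _)
      (mem_filter.2 ⟨mem_univ v, hv⟩)
  · omega

lemma isIndepSet_leaves (hU : IsUnicyclic U) : U.IsIndepSet (leaves U : Set V) := by
  intro u hu v hv _ huv
  obtain ⟨w, -, hw⟩ := exists_mem_notMem_of_card_lt_card (s := {u, v}) (t := univ)
    (card_le_two.trans_lt (card_univ (α := V) ▸ hU.three_le_card))
  obtain ⟨q⟩ := hU.connected.preconnected u w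
  obtain ⟨⟨⟨x, y⟩, hxy⟩, -, hx, hy⟩ := q.exists_boundary_dart {u, v} (by simp) (by simpa using hw)
  rcases hx with rfl | rfl
  · exact hy (.inr (eq_of_mem_leaves hu hxy huv))
  · exact hy (.inl (eq_of_mem_leaves hv hxy huv.symm))

end IsUnicyclic

end Leaves

section SpreadSets

variable {V : Type*} [Fintype V] {U : SimpleGraph V} {P P' : Finset V}

/-- A set of vertices of degree at most two lying pairwise at distance at least three. -/
structure IsSpread (U : SimpleGraph V) (P : Finset V) : Prop where
  degree_le : ∀ v ∈ P, U.degree v ≤ 2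
  isIndepSet : U.IsIndepSet (P : Set V)
  eq_of_adj : ∀ u ∈ P, ∀ v ∈ P, ∀ w, U.Adj u w → U.Adj v w → u = v

lemma IsSpread.mono (hP : IsSpread U P) (hP' : P' ⊆ P) : IsSpread U P' where
  degree_le v hv := hP.degree_le v (hP' hv)
  isIndepSet := hP.isIndepSet.mono (coe_subset.2 hP')
  eq_of_adj u hu v hv := hP.eq_of_adj u (hP' hu) v (hP' hv)

lemma IsSpread.notMem_of_adj {u v : V} (hP : IsSpread U P) (hu : u ∈ P) (huv : U.Adj u v) :
    v ∉ P :=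
  fun hv => hP.isIndepSet hu hv huv.ne huv

/-- The closed neighbourhoods of the vertices of degree at least three. -/
noncomputable def branchNbhd (U : SimpleGraph V) : Finset V :=
  (univ.filter fun v => 3 ≤ U.degree v).biUnion fun v => insert v (U.neighborFinset v)

lemma degree_le_two_of_notMem_branchNbhd {v : V} (hv : v ∉ branchNbhd U) : U.degree v ≤ 2 := by
  by_contra! h3
  exact hv (mem_biUnion.2 ⟨v, mem_filter.2 ⟨mem_univ v, h3⟩, mem_insert_self v _⟩)

lemma degree_le_two_of_adj_of_notMem_branchNbhd {v w : V} (hv : v ∉ branchNbhd U)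
    (hvw : U.Adj v w) : U.degree w ≤ 2 := by
  by_contra! h3
  exact hv (mem_biUnion.2 ⟨w, mem_filter.2 ⟨mem_univ w, h3⟩,
    mem_insert_of_mem (by simpa using hvw.symm)⟩)

namespace IsUnicyclic

lemma exists_degree_le_two (hU : IsUnicyclic U) : ∃ r, U.degree r ≤ 2 := by
  have := hU.connected.nonempty
  obtain ⟨r, -, hr⟩ := exists_le_of_sum_le (s := univ) (f := fun v => U.degree v) (g := fun _ => 2)
    univ_nonempty (by simp [hU.sum_degree, mul_comm])
  exact ⟨r, hr⟩

lemma card_branchNbhd_le (hU : IsUnicyclic U) : #(branchNbhd U) ≤ 4 * #(leaves U) := by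
  rw [← hU.sum_degree_sub_two, mul_sum]
  refine card_biUnion_le.trans (sum_le_sum fun v hv => ?_)
  have h3 : 3 ≤ U.degree v := (mem_filter.1 hv).2
  have hinsert := card_insert_le v (U.neighborFinset v)
  rw [U.card_neighborFinset_eq_degree] at hinsert
  omega

end IsUnicyclic

lemma IsParentMap.parent_or_parent_of_adj {A : Finset V} {h : V → ℕ} {p : V → V} {a b v w : V}
    (hp : IsParentMap U A h p)
    (hab : ∀ x y, U.Adj x y → s(x, y) ∈ parentEdges A p ∨ s(x, y) = s(a, b))
    (hva : v ≠ a) (hvb : v ≠ b) (hvw : U.Adj v w) :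
    p v = w ∧ h w + 1 = h v ∨ p w = v ∧ h v + 1 = h w := by
  have hmem : s(v, w) ∈ parentEdges A p := (hab v w hvw).resolve_right fun he => by
    have : v ∈ s(a, b) := he ▸ Sym2.mem_mk_left v w
    exact (Sym2.mem_iff.1 this).elim hva hvb
  rcases mk_mem_parentEdges.1 hmem with ⟨hvA, rfl⟩ | ⟨hwA, rfl⟩
  · exact .inl ⟨rfl, hp.height v hvA⟩
  · exact .inr ⟨rfl, hp.height w hwA⟩

/-- Vertices of `P` with a common neighbour `w` differ in height by zero or two, hence not at all;
if distinct, they are both children of `w`, which makes `w` a branch vertex. -/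
lemma isSpread_of_height_mod_three {h : V → ℕ} {p : V → V} {r a b : V}
    (hp : IsParentMap U {r} h p)
    (hab : ∀ x y, U.Adj x y → s(x, y) ∈ parentEdges {r} p ∨ s(x, y) = s(a, b))
    (hP : ∀ v ∈ P, v ∉ branchNbhd U ∧ v ≠ a ∧ v ≠ b ∧ ¬ U.Adj v r) {i : ℕ}
    (hi : ∀ v ∈ P, h v % 3 = i) : IsSpread U P := by
  have hedge : ∀ v ∈ P, ∀ w, U.Adj v w → p v = w ∧ h w + 1 = h v ∨ p w = v ∧ h v + 1 = h w :=
    fun v hv w => hp.parent_or_parent_of_adj hab (hP v hv).2.1 (hP v hv).2.2.1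
  refine ⟨fun v hv => degree_le_two_of_notMem_branchNbhd (hP v hv).1,
    fun u hu v hv _ huv => ?_, fun u hu v hv w huw hvw => ?_⟩
  · have := hi u hu
    have := hi v hv
    rcases hedge u hu v huv with ⟨-, _⟩ | ⟨-, _⟩ <;> omega
  · have := hi u hu
    have := hi v hv
    rcases hedge u hu w huw with ⟨hpu, _⟩ | ⟨hpu, _⟩ <;>
      rcases hedge v hv w hvw with ⟨hpv, _⟩ | ⟨hpv, _⟩
    · by_contra huv
      have hwr : w ∉ ({r} : Finset V) := by
        rw [mem_singleton]
        rintro rfl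
        exact (hP u hu).2.2.2 huw
      have hw := hp.height w hwr
      have hsub : {u, v, p w} ⊆ U.neighborFinset w := by
        simp [insert_subset_iff, huw.symm, hvw.symm, hp.adj w hwr]
      have hcard : #{u, v, p w} = 3 :=
        card_eq_three.2 ⟨u, v, p w, huv, by rintro rfl; omega, by rintro rfl; omega, rfl⟩
      have := card_le_card hsub
      have := degree_le_two_of_adj_of_notMem_branchNbhd (hP u hu).1 huw
      rw [U.card_neighborFinset_eq_degree] at *
      omega
    · omega
    · omega
    · exact hpu.symm.trans hpv

lemma IsUnicyclic.exists_isSpread (hU : IsUnicyclic U) {q : ℕ}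
    (hq : 3 * q + 4 * #(leaves U) + 5 < Fintype.card V) : ∃ P, IsSpread U P ∧ q < #P := by
  obtain ⟨r, hr⟩ := hU.exists_degree_le_two
  obtain ⟨h, p, hp⟩ := exists_isParentMap hU.connected (singleton_nonempty r)
  obtain ⟨a, b, hab⟩ := hU.exists_extra_edge hp
  let B : Finset V := branchNbhd U ∪ insert a (insert b (U.neighborFinset r))
  have hB : #B ≤ 4 * #(leaves U) + 4 := by
    have h_union : #B ≤ _ := card_union_le _ _
    have h_branch := hU.card_branchNbhd_le
    have ha := card_insert_le a (insert b (U.neighborFinset r))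
    have hb := card_insert_le b (U.neighborFinset r)
    rw [U.card_neighborFinset_eq_degree] at hb
    omega
  obtain ⟨i, -, hi⟩ := exists_lt_card_fiber_of_mul_lt_card_of_maps_to (s := Bᶜ) (t := range 3)
    (f := fun v => h v % 3) (n := q) (fun v _ => mem_range.2 (Nat.mod_lt _ three_pos))
    (by rw [card_range, card_compl]; omega)
  refine ⟨_, isSpread_of_height_mod_three (i := i) hp hab (fun v hv => ?_)
    (fun v hv => (mem_filter.1 hv).2), hi⟩
  have hvB := mem_compl.1 (mem_filter.1 hv).1
  simp only [B, mem_union, mem_insert, SimpleGraph.mem_neighborFinset, not_or] at hvB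
  exact ⟨hvB.1, hvB.2.1, hvB.2.2.1, fun hvr => hvB.2.2.2 hvr.symm⟩

end SpreadSets

section FewLeaves

variable {V W : Type*} [Fintype V] {U : SimpleGraph V} {G : SimpleGraph W} {P : Finset V}
  {K R : Finset W}

lemma IsSpread.contains_compl_of_placement_outside (hP : IsSpread U P)
    (hK : G.IsIndepSet (K : Set W)) (hcard : Fintype.card V ≤ #K + #P) {Z : Finset W}
    (hZ : #P ≤ #Z) (hZK : ∀ z ∈ Z, z ∉ K ∧ 2 * #P ≤ #(nbhdIn Gᶜ K z)) : Contains Gᶜ U := by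
  rcases P.eq_empty_or_nonempty with rfl | hPne
  · exact contains_compl_of_card_le_isIndepSet hK (by simpa using hcard)
  obtain ⟨z, -⟩ := card_pos.1 (hPne.card_pos.trans_le hZ)
  have : Nonempty W := ⟨z⟩
  obtain ⟨τ, hτ, hτZ⟩ := exists_injOn_forall_mem (s := P) (A := fun _ => Z) fun _ _ => hZ
  let Q := P.biUnion fun u => U.neighborFinset u
  have hQ : #Q ≤ 2 * #P := by
    rw [mul_comm]
    exact card_biUnion_le_card_mul _ _ 2 fun u hu =>
      (U.card_neighborFinset_eq_degree u).trans_le (hP.degree_le u hu)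
  have howner : ∀ q ∈ Q, ∃ u ∈ P, U.Adj u q := by simp [Q]
  choose! owner howner hadj using howner
  obtain ⟨σ, hσ, hσK⟩ := exists_injOn_forall_mem (s := Q)
    (A := fun q => nbhdIn Gᶜ K (τ (owner q)))
    fun q hq => hQ.trans (hZK _ (hτZ _ (howner q hq))).2
  refine FanRamsey.contains_compl_of_placement_outside (τ := τ) (σ := σ) hK
    (disjoint_right.2 fun q hq => hP.notMem_of_adj (howner q hq) (hadj q hq))
    (fun u hu v huv => mem_biUnion.2 ⟨u, hu, by simpa using huv⟩) hσ
    (fun q hq => nbhdIn_subset _ _ _ (hσK q hq)) hτ (fun u hu => (hZK _ (hτZ u hu)).1)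
    (fun u hu q hq huq => ?_) hcard
  rw [hP.eq_of_adj u hu _ (howner q hq) q huq (hadj q hq)]
  exact ((G.compl_adj _ _).1 (mem_nbhdIn.1 (hσK q hq)).2).2

lemma IsSpread.card_le_of_blocked (hP : IsSpread U P) {f : V → W} (hf : IsPartialCopy U Gᶜ Pᶜ f)
    (hfR : ∀ v ∈ Pᶜ, f v ∈ R) {A : Finset V} (hA : A ⊆ P) {y : W}
    (hblock : ∀ u ∈ A, ∃ v, U.Adj u v ∧ G.Adj y (f v)) : #A ≤ #(nbhdIn G R y) := by
  choose! b hub hyb using hblock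
  have hbP : ∀ u ∈ A, b u ∈ Pᶜ := fun u hu => mem_compl.2 (hP.notMem_of_adj (hA hu) (hub u hu))
  refine card_le_card_of_injOn (fun u => f (b u))
    (fun u hu => mem_nbhdIn.2 ⟨hfR _ (hbP u hu), hyb u hu⟩) fun u hu u' hu' e => ?_
  have hb : b u = b u' := hf.injOn (hbP u hu) (hbP u' hu') e
  exact hP.eq_of_adj u (hA hu) u' (hA hu') (b u) (hub u hu) (hb ▸ hub u' hu')

/-- Each `u ∈ P` has at most `2 * D` forbidden places, and a place is forbidden for at most `D`
vertices of `P` because their neighbourhoods are disjoint. Hence Hall's condition holds. -/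
lemma IsSpread.exists_injOn_avoiding [Nonempty W] (hP : IsSpread U P) {f : V → W} {D : ℕ}
    (hf : IsPartialCopy U Gᶜ Pᶜ f) (hfR : ∀ v ∈ Pᶜ, f v ∈ R)
    (hR : ∀ x ∈ R, #(nbhdIn G R x) ≤ D) (hPD : 3 * D ≤ #P) {T : Finset W} (hTR : T ⊆ R)
    (hT : #P ≤ #T) : ∃ g : V → W, Set.InjOn g P ∧
      ∀ u ∈ P, g u ∈ T ∧ ∀ v, U.Adj u v → ¬ G.Adj (g u) (f v) := by
  let forbidden : V → Finset W := fun u => (U.neighborFinset u).biUnion fun v => nbhdIn G R (f v)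
  have h_forbidden : ∀ u ∈ P, #(forbidden u) ≤ 2 * D := by
    intro u hu
    refine (card_biUnion_le_card_mul _ _ D fun v hv => hR _ (hfR v ?_)).trans ?_
    · exact mem_compl.2 (hP.notMem_of_adj hu (by simpa using hv))
    · rw [U.card_neighborFinset_eq_degree]
      exact Nat.mul_le_mul_right D (hP.degree_le u hu)
  have h_hall : ∀ A ⊆ P, #A ≤ #(A.biUnion fun u => T \ forbidden u) := by
    intro A hA
    rcases A.eq_empty_or_nonempty with rfl | ⟨u, hu⟩
    · simp
    rcases le_or_gt #A D with hAD | hDA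
    · refine le_trans ?_ (card_le_card (subset_biUnion_of_mem (fun u => T \ forbidden u) hu))
      have := le_card_sdiff (forbidden u) T
      have := h_forbidden u (hA hu)
      omega
    · refine (card_le_card hA).trans (hT.trans (card_le_card fun y hy => ?_))
      by_contra hyA
      refine hDA.not_ge ((hP.card_le_of_blocked hf hfR hA fun u hu => ?_).trans (hR y (hTR hy)))
      have hyu : y ∈ forbidden u := by
        by_contra hyu
        exact hyA (mem_biUnion.2 ⟨u, hu, mem_sdiff.2 ⟨hy, hyu⟩⟩)
      obtain ⟨v, hv, hyv⟩ := mem_biUnion.1 hyu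
      exact ⟨v, by simpa using hv, (mem_nbhdIn.1 hyv).2.symm⟩
  obtain ⟨g, hg, hgT⟩ := exists_injOn_forall_mem_of_hall h_hall
  refine ⟨g, hg, fun u hu => ?_⟩
  obtain ⟨hguT, hgu⟩ := mem_sdiff.1 (hgT u hu)
  refine ⟨hguT, fun v huv hadj => hgu (mem_biUnion.2 ⟨v, by simpa using huv, ?_⟩)⟩
  exact mem_nbhdIn.2 ⟨hTR hguT, hadj.symm⟩

lemma IsSpread.contains_compl_of_sparse (hP : IsSpread U P) {h : V → ℕ} {D : ℕ}
    (hU : IsDegeneracyOrder U h 2) (hR : ∀ x ∈ R, #(nbhdIn G R x) ≤ D)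
    (hPD : 3 * D ≤ #P) (hcard : Fintype.card V ≤ #R) : Contains Gᶜ U := by
  rcases isEmpty_or_nonempty W with hW | hW
  · exact contains_compl_of_card_le_isIndepSet (K := ∅) (by simp) (by
      simpa [eq_empty_of_isEmpty R] using hcard)
  have h_compl : #Pᶜ + #P = Fintype.card V := card_compl_add_card P
  obtain ⟨f, hfR, hf⟩ := hU.exists_isPartialCopy hR (S := Pᶜ) (by omega)
  have hT : #P ≤ #(R \ Pᶜ.image f) := by
    have := le_card_sdiff (Pᶜ.image f) R
    have himage : #(Pᶜ.image f) ≤ #Pᶜ := card_image_le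
    omega
  obtain ⟨g, hg, hgT⟩ := hP.exists_injOn_avoiding hf hfR hR hPD sdiff_subset hT
  have hgf : ∀ u ∈ P, ∀ v ∈ Pᶜ, g u ≠ f v := fun u hu v hv e =>
    (mem_sdiff.1 (hgT u hu).1).2 (e ▸ mem_image_of_mem f hv)
  have hcopy := (IsPartialCopy.of_isIndepSet_source hP.isIndepSet hg).glue hf
    disjoint_compl_right hgf fun u hu v hv huv =>
      (G.compl_adj _ _).2 ⟨hgf u hu v hv, (hgT u hu).2 v huv⟩
  rw [union_compl] at hcopy
  exact hcopy.contains

/-- If fewer than `t` vertices outside `K` have `2 * t` non-neighbours in `K`, then the graph on the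
others is sparse: were some degree there at least `m`, each of `m` neighbours would have `m` common
neighbours in `K` with their centre, which makes a fan. -/
lemma IsUnicyclic.contains_compl_of_card_leaves_le [Fintype W] {m n : ℕ}
    (hG : ¬ Contains G (fan m)) (hm : 17 * m < n) (hW : 2 * n ≤ Fintype.card W + 1)
    (hU : IsUnicyclic U) (hV : Fintype.card V = n) (hleaves : #(leaves U) + 2 ≤ 2 * m)
    (hK : G.IsIndepSet (K : Set W)) (hKn : #K ≤ n) (hnK : n + 2 ≤ #K + 2 * m) :
    Contains Gᶜ U := by
  obtain ⟨P, hP, hPcard⟩ := hU.exists_isSpread (q := 3 * m - 4) (by omega)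
  obtain ⟨t, rfl⟩ := Nat.exists_eq_add_of_le hKn
  let hasRoom : W → Prop := fun z => 2 * t ≤ #(nbhdIn Gᶜ K z)
  by_cases hZ : t ≤ #(Kᶜ.filter hasRoom)
  · obtain ⟨P', hP', rfl⟩ := exists_subset_card_eq (show t ≤ #P by omega)
    exact (hP.mono hP').contains_compl_of_placement_outside hK hV.le hZ fun z hz =>
      ⟨mem_compl.1 (mem_filter.1 hz).1, (mem_filter.1 hz).2⟩
  · have h_split := card_filter_add_card_filter_not (s := Kᶜ) hasRoom
    have h_compl := card_compl_add_card K
    have h_noRoom : ∀ z ∈ Kᶜ.filter (¬ hasRoom ·), #(nbhdIn Gᶜ K z) < 2 * t := fun z hz =>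
      not_le.1 (mem_filter.1 hz).2
    obtain ⟨r⟩ := hU.connected.nonempty
    obtain ⟨h, p, hp⟩ := exists_isParentMap hU.connected (singleton_nonempty r)
    refine hP.contains_compl_of_sparse (R := Kᶜ.filter (¬ hasRoom ·)) (D := m - 1)
      (hU.isDegeneracyOrder hp) (fun x hx => Nat.le_pred_of_lt ?_) (by omega) (by omega)
    refine card_nbhdIn_lt_of_fanFree hG (disjoint_compl_left.mono_left (filter_subset _ _))
      fun y hy => ?_
    have hxK : x ∉ K := mem_compl.1 (mem_filter.1 hx).1
    have h_x := h_noRoom x hx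
    have h_y := h_noRoom y (mem_nbhdIn.1 hy).1
    have h_card := card_nbhdIn_add_compl_of_notMem (G := G) hxK
    omega

end FewLeaves

section MaximumMatchings

variable {W : Type*} {G : SimpleGraph W} {S M : Finset W} {g : W → W} {D : ℕ}

namespace IsMatchingIn

lemma exists_matching_nbhdIn (hM : IsMatchingIn G S M g) {x : W} (hx : x ∉ S) :
    ∃ M', IsMatchingIn G (nbhdIn G S x) M' g ∧ #M ≤ #M' + #(nbhdIn Gᶜ S x) := by
  let common : W → Prop := fun y => G.Adj x y ∧ G.Adj x (g y)
  refine ⟨M.filter common, ?_, ?_⟩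
  · have hM' := hM.restrict (filter_subset common M)
    exact
      { subset := fun y hy => mem_nbhdIn.2 ⟨hM'.subset hy, (mem_filter.1 hy).2.1⟩
        partner_mem := fun y hy => mem_nbhdIn.2 ⟨hM'.partner_mem y hy, (mem_filter.1 hy).2.2⟩
        partner_notMem := hM'.partner_notMem
        adj := hM'.adj
        injOn := hM'.injOn }
  · rw [← card_filter_add_card_filter_not (s := M) common, add_le_add_iff_left]
    refine card_le_card_of_injOn (fun y => if G.Adj x y then g y else y) (fun y hy => ?_) ?_
    · obtain ⟨hyM, hy⟩ := mem_filter.1 hy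
      have hxS : ∀ z ∈ S, ¬ G.Adj x z → z ∈ nbhdIn Gᶜ S x := fun z hz hxz =>
        mem_nbhdIn.2 ⟨hz, (G.compl_adj x z).2 ⟨(ne_of_mem_of_not_mem hz hx).symm, hxz⟩⟩
      dsimp only
      split_ifs with hxy
      · exact hxS _ (hM.partner_mem y hyM) fun hxg => hy ⟨hxy, hxg⟩
      · exact hxS _ (hM.subset hyM) hxy
    · intro y hy z hz hyz
      have hyM := (mem_filter.1 hy).1
      have hzM := (mem_filter.1 hz).1
      dsimp only at hyz
      split_ifs at hyz
      · exact hM.injOn hyM hzM hyz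
      · exact absurd (hyz ▸ hzM) (hM.partner_notMem y hyM)
      · exact absurd (hyz ▸ hyM) (hM.partner_notMem z hzM)
      · exact hyz

/-- Otherwise `i, y, g y, i'` is an augmenting path. -/
lemma eq_of_adj_of_maximum (hM : IsMatchingIn G S M g)
    (hmax : ∀ M' g', IsMatchingIn G S M' g' → #M' ≤ #M) {y i i' : W} (hy : y ∈ M)
    (hi : i ∈ S \ (M ∪ M.image g)) (hi' : i' ∈ S \ (M ∪ M.image g))
    (hyi : G.Adj y i) (hgyi : G.Adj (g y) i') : i = i' := by
  by_contra hne
  obtain ⟨hiS, hiM⟩ := mem_sdiff.1 hi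
  obtain ⟨hiS', hiM'⟩ := mem_sdiff.1 hi'
  simp only [mem_union, mem_image, not_or, not_exists, not_and] at hiM hiM'
  have hgy : ∀ z ∈ M, g z ≠ y := fun z hz e => hM.partner_notMem z hz (e ▸ hy)
  have hgyM : g y ∉ M := hM.partner_notMem y hy
  have hyi' : y ≠ i' := ne_of_mem_of_not_mem hy hiM'.1
  have hgi : g y ≠ i := hiM.2 y hy
  let N : Finset W := {y, g y}
  have hpath : IsMatchingIn G S N (fun z => if z = y then i else i') := by
    have hgy' := hgy y hy
    constructor
    · simp [N, insert_subset_iff, hM.subset hy, hM.partner_mem y hy]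
    · simp [N, hiS, hiS', hgy']
    · simp [N, hgy', hyi.ne', hgyi.ne', hgi.symm, hyi'.symm]
    · simp [N, hyi, hgyi, hgy']
    · simp [N, Set.InjOn, hgy', hne, Ne.symm hne]
  have hdisj : Disjoint (M.erase y ∪ (M.erase y).image g)
      (N ∪ N.image fun z => if z = y then i else i') := by
    have hinj : ∀ z ∈ M, z ≠ y → g z ≠ g y := fun z hz hzy e => hzy (hM.injOn hz hy e)
    simp only [N, image_insert, image_singleton, disjoint_union_right, disjoint_insert_right,
      disjoint_singleton_right, mem_union, mem_erase, mem_image]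
    grind
  have hcard := hmax _ _ ((hM.restrict (erase_subset y M)).union hpath hdisj)
  rw [card_union_of_disjoint (by simp [N, hgyM]), card_erase_of_mem hy,
    card_pair (hgy y hy).symm] at hcard
  have := card_pos.2 ⟨y, hy⟩
  omega

/-- If the unmatched neighbourhoods of `y` and `g y` are both nonempty, they are one and the same
singleton. -/
lemma card_nbhdIn_add_card_nbhdIn_le (hM : IsMatchingIn G S M g)
    (hmax : ∀ M' g', IsMatchingIn G S M' g' → #M' ≤ #M)
    (hS : ∀ x ∈ S, #(nbhdIn G S x) ≤ D + 1) (hD : 2 ≤ D) {y : W} (hy : y ∈ M) :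
    #(nbhdIn G (S \ (M ∪ M.image g)) y) + #(nbhdIn G (S \ (M ∪ M.image g)) (g y)) ≤ D := by
  set I := S \ (M ∪ M.image g)
  have hgyM : g y ∈ M ∪ M.image g := mem_union_right _ (mem_image_of_mem g hy)
  have hle : ∀ u ∈ S, ∀ u' ∈ M ∪ M.image g, G.Adj u u' → #(nbhdIn G I u) ≤ D := by
    intro u hu u' hu' huu'
    have hu'I : u' ∉ nbhdIn G I u := fun h => (mem_sdiff.1 (mem_nbhdIn.1 h).1).2 hu'
    have hsub : insert u' (nbhdIn G I u) ⊆ nbhdIn G S u :=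
      insert_subset (mem_nbhdIn.2 ⟨hM.support_subset hu', huu'⟩) (nbhdIn_mono sdiff_subset u)
    have := (card_le_card hsub).trans (hS u hu)
    rw [card_insert_of_notMem hu'I] at this
    omega
  rcases (nbhdIn G I y).eq_empty_or_nonempty with hIy | ⟨i, hi⟩
  · rw [hIy, card_empty, zero_add]
    exact hle _ (hM.partner_mem y hy) y (mem_union_left _ hy) (hM.adj y hy).symm
  rcases (nbhdIn G I (g y)).eq_empty_or_nonempty with hIgy | ⟨i', hi'⟩
  · rw [hIgy, card_empty, add_zero]
    exact hle y (hM.subset hy) _ hgyM (hM.adj y hy)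
  have heq : ∀ j ∈ nbhdIn G I y, ∀ j' ∈ nbhdIn G I (g y), j = j' := fun j hj j' hj' =>
    hM.eq_of_adj_of_maximum hmax hy (mem_nbhdIn.1 hj).1 (mem_nbhdIn.1 hj').1
      (mem_nbhdIn.1 hj).2 (mem_nbhdIn.1 hj').2
  have h₁ : #(nbhdIn G I y) ≤ 1 := card_le_one.2 fun j hj k hk =>
    (heq j hj i' hi').trans (heq k hk i' hi').symm
  have h₂ : #(nbhdIn G I (g y)) ≤ 1 := card_le_one.2 fun j hj k hk =>
    (heq i hi j hj).symm.trans (heq i hi k hk)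
  omega

lemma sum_card_nbhdIn_unmatched_le (hM : IsMatchingIn G S M g)
    (hmax : ∀ M' g', IsMatchingIn G S M' g' → #M' ≤ #M)
    (hS : ∀ x ∈ S, #(nbhdIn G S x) ≤ D + 1) (hD : 2 ≤ D) :
    ∑ x ∈ S \ (M ∪ M.image g), #(nbhdIn G S x) ≤ #M * D := by
  have hnbhd : ∀ x ∈ S \ (M ∪ M.image g), nbhdIn G S x = nbhdIn G (M ∪ M.image g) x := by
    intro x hx
    ext y
    simp only [mem_nbhdIn, and_congr_left_iff]
    refine fun hxy => ⟨fun hy => ?_, fun hy => hM.support_subset hy⟩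
    by_contra hyM
    exact hM.isIndepSet_sdiff_support hmax hx (mem_sdiff.2 ⟨hy, hyM⟩) hxy.ne hxy
  have hdisj : Disjoint M (M.image g) := by
    rw [disjoint_right, forall_mem_image]
    exact hM.partner_notMem
  rw [sum_congr rfl fun x hx => congrArg card (hnbhd x hx), sum_card_nbhdIn_comm, sum_union hdisj,
    sum_image hM.injOn, ← sum_add_distrib, ← smul_eq_mul, ← sum_const]
  exact sum_le_sum fun y hy => hM.card_nbhdIn_add_card_nbhdIn_le hmax hS hD hy

end IsMatchingIn

end MaximumMatchings

section Bipartition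

variable {W : Type*} [Fintype W] {G : SimpleGraph W} {P K L : Finset W} {m n D : ℕ}

lemma card_nbhdIn_add_card_nbhdIn_compl (G : SimpleGraph W) (P : Finset W) (x : W) :
    #(nbhdIn G P x) + #(nbhdIn G Pᶜ x) = G.degree x := by
  rw [← card_nbhdIn_union disjoint_compl_right, union_compl, card_nbhdIn_univ]

lemma card_nbhdIn_lt_of_sparse_bipartition (hG : ¬ Contains G (fan m))
    (hW : Fintype.card W + 1 = 2 * n) (hdeg : ∀ v, n ≤ G.degree v) (hnP : n ≤ #P)
    (hD : ∀ x ∈ P, #(nbhdIn G P x) ≤ D) (hmD : m + 2 * D ≤ n) {x : W} (hx : x ∈ P) :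
    #(nbhdIn G P x) < m := by
  have hPc : ∀ y ∈ P, n ≤ #(nbhdIn G Pᶜ y) + D := fun y hy => by
    have := hdeg y
    have := hD y hy
    have := card_nbhdIn_add_card_nbhdIn_compl G P y
    omega
  refine card_nbhdIn_lt_of_fanFree hG disjoint_compl_right fun y hy => ?_
  have hyP := (mem_nbhdIn.1 hy).1
  have := hPc x hx
  have := hPc y hyP
  have := card_nbhdIn_add_compl_of_notMem (G := G) (S := Pᶜ) (notMem_compl.2 hyP)
  have := card_add_card_compl P
  omega

lemma IsMatchingIn.card_add_lt_of_sparse_bipartition {M : Finset W} {g : W → W}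
    (hM : IsMatchingIn G P M g) (hG : ¬ Contains G (fan m)) (hdeg : ∀ v, n ≤ G.degree v)
    (hD : ∀ x ∈ Pᶜ, #(nbhdIn G Pᶜ x) ≤ D) (hPD : 2 * m + #P + 2 * D ≤ 2 * n)
    {x : W} (hx : x ∈ Pᶜ) : #M + n < m + #P := by
  have hP : ∀ y ∈ Pᶜ, n ≤ #(nbhdIn G P y) + D := fun y hy => by
    have := hdeg y
    have := hD y hy
    have := card_nbhdIn_add_card_nbhdIn_compl G P y
    omega
  obtain ⟨M', hM', hMM'⟩ := hM.exists_matching_nbhdIn (mem_compl.1 hx)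
  have hM'm := hM'.card_lt_of_fanFree hG fun y hy => (mem_nbhdIn.1 hy).2
  have hlt : #M' + #(nbhdIn G Pᶜ x) < m := by
    refine hM'.card_add_card_nbhdIn_lt_of_fanFree hG disjoint_compl_left fun y hy => ?_
    have hyP := (mem_nbhdIn.1 hy).1
    have := hP x hx
    have := hP y hyP
    have := card_nbhdIn_add_compl_of_notMem (G := G) (mem_compl.1 hyP)
    omega
  have := hdeg x
  have := card_nbhdIn_add_card_nbhdIn_compl G P x
  have := card_nbhdIn_add_compl_of_notMem (G := G) (mem_compl.1 hx)
  omega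

lemma mul_lt_mul_of_card_unmatched {s i k : ℕ} (hn : (D + 2) ^ 2 + 1 ≤ n + (D + 2)) (hsD : s ≤ D)
    (hk : k ≤ D + 1 + s) (hik : i + 2 * k = n + s) : k * D < (s + 1) * i := by
  have hi : D ^ 2 + D + 1 ≤ i + s := by nlinarith
  calc k * D ≤ (D + 1 + s) * D := Nat.mul_le_mul_right D hk
    _ < (s + 1) * i := by
      zify at hsD hi ⊢
      nlinarith [mul_le_mul_of_nonneg_left hi (show (0 : ℤ) ≤ s + 1 by positivity),
        mul_nonneg (Int.natCast_nonneg s) (show (0 : ℤ) ≤ D ^ 2 - s by nlinarith)]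

lemma exists_degree_lt_of_sparse_bipartition (hG : ¬ Contains G (fan m)) (hm : 4 ≤ m)
    (hn : m ^ 2 + 1 ≤ n + m) (hW : Fintype.card W + 1 = 2 * n) (hnP : n ≤ #P)
    (hP : ∀ x ∈ P, #(nbhdIn G P x) ≤ D) (hPc : ∀ x ∈ Pᶜ, #(nbhdIn G Pᶜ x) ≤ D)
    (hmD : 3 * m + 2 * D ≤ n) : ∃ v, G.degree v < n := by
  by_contra! hdeg
  obtain ⟨s, hs⟩ := Nat.exists_eq_add_of_le hnP
  have hcompl := card_add_card_compl P
  have hlow : ∀ x ∈ P, s + 1 ≤ #(nbhdIn G P x) := fun x _ => by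
    have := hdeg x
    have := card_nbhdIn_add_card_nbhdIn_compl G P x
    have := card_le_card (nbhdIn_subset G Pᶜ x)
    omega
  have hup : ∀ x ∈ P, #(nbhdIn G P x) < m := fun x hx =>
    card_nbhdIn_lt_of_sparse_bipartition hG hW hdeg hnP hP (by omega) hx
  obtain ⟨x, hx⟩ : P.Nonempty := card_pos.1 (by omega)
  have hsm : s + 1 < m := (hlow x hx).trans_lt (hup x hx)
  obtain ⟨z, hz⟩ : Pᶜ.Nonempty := card_pos.1 (by omega)
  obtain ⟨M, g, hM, hmax⟩ := exists_maximum_matching G P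
  have hMm := hM.card_add_lt_of_sparse_bipartition hG hdeg hPc (by omega) hz
  have hI : #(P \ (M ∪ M.image g)) + 2 * #M = #P := by
    rw [← hM.card_support, card_sdiff_add_card_eq_card hM.support_subset]
  obtain ⟨E, rfl⟩ : ∃ E, m = E + 2 := ⟨m - 2, by omega⟩
  have hcount : (s + 1) * #(P \ (M ∪ M.image g)) ≤ #M * E :=
    calc (s + 1) * #(P \ (M ∪ M.image g))
        = ∑ x ∈ P \ (M ∪ M.image g), (s + 1) := by rw [sum_const, smul_eq_mul, mul_comm]
      _ ≤ ∑ x ∈ P \ (M ∪ M.image g), #(nbhdIn G P x) :=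
        sum_le_sum fun x hx => hlow x (mem_sdiff.1 hx).1
      _ ≤ #M * E := hM.sum_card_nbhdIn_unmatched_le hmax
        (fun x hx => Nat.lt_succ_iff.1 (hup x hx)) (by omega)
  exact hcount.not_gt (mul_lt_mul_of_card_unmatched hn (by omega) (by omega) (by omega))

lemma card_nbhdIn_compl_add_card_lt_of_isIndepSet (hW : Fintype.card W + 1 = 2 * n)
    (hdeg : ∀ v, n ≤ G.degree v) (hK : G.IsIndepSet K) (hKL : Disjoint K L) {x : W}
    (hx : x ∈ K) : #(nbhdIn Gᶜ L x) + #K < n := by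
  have hL : #(nbhdIn Gᶜ L x) ≤ #(nbhdIn Gᶜ Kᶜ x) :=
    card_nbhdIn_mono (subset_compl_iff_disjoint_left.2 hKL) x
  have := hdeg x
  have := card_nbhdIn_add_card_nbhdIn_compl G K x
  rw [nbhdIn_eq_empty_of_isIndepSet hK hx, card_empty] at this
  have := card_nbhdIn_add_compl_of_notMem (G := G) (S := Kᶜ) (notMem_compl.2 hx)
  have := card_add_card_compl K
  omega

lemma card_nbhdIn_lt_of_isIndepSet (hG : ¬ Contains G (fan m))
    (hW : Fintype.card W + 1 = 2 * n) (hdeg : ∀ v, n ≤ G.degree v) (hK : G.IsIndepSet K)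
    (hKL : Disjoint K L) (hKn : n + 2 ≤ #K + 2 * m) {z : W}
    (hz : 3 * m ≤ #(nbhdIn G L z) + 3) : #(nbhdIn G K z) < m := by
  refine card_nbhdIn_lt_of_fanFree hG hKL fun y hy => ?_
  have := card_nbhdIn_compl_add_card_lt_of_isIndepSet hW hdeg hK hKL (mem_nbhdIn.1 hy).1
  omega

lemma exists_disjoint_isIndepSet_of_fanFree (hG : ¬ Contains G (fan m)) (hK : G.IsIndepSet K)
    {x : W} (hx : x ∈ K) :
    ∃ L : Finset W, G.IsIndepSet L ∧ Disjoint K L ∧ G.degree x + 2 ≤ #L + 2 * m := by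
  obtain ⟨L, hLx, hL, hLm⟩ := exists_isIndepSet_of_fanFree hG x
  refine ⟨L, hL, disjoint_left.2 fun y hyK hyL => ?_, hLm⟩
  have hxy := (mem_nbhdIn.1 (hLx hyL)).2
  exact hK hx hyK hxy.ne hxy

lemma exists_isIndepSet_pair (hG : ¬ Contains G (fan m)) (hmn : 2 * m < n + 2) [Nonempty W]
    (hdeg : ∀ v, n ≤ G.degree v) :
    ∃ K L : Finset W, G.IsIndepSet K ∧ G.IsIndepSet L ∧ Disjoint K L ∧
      n + 2 ≤ #K + 2 * m ∧ n + 2 ≤ #L + 2 * m := by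
  have hle : ∀ v, n + 2 ≤ G.degree v + 2 := fun v => Nat.add_le_add_right (hdeg v) 2
  obtain ⟨v⟩ := ‹Nonempty W›
  obtain ⟨K, -, hK, hKm⟩ := exists_isIndepSet_of_fanFree hG v
  obtain ⟨x, hx⟩ : K.Nonempty := card_pos.1 (by have := hle v; omega)
  obtain ⟨L, hL, hKL, hLm⟩ := exists_disjoint_isIndepSet_of_fanFree hG hK hx
  exact ⟨K, L, hK, hL, hKL, (hle v).trans hKm, (hle x).trans hLm⟩

lemma exists_sparse_bipartition (hG : ¬ Contains G (fan m)) (hmn : 10 * m < n)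
    (hW : Fintype.card W + 1 = 2 * n) (hdeg : ∀ v, n ≤ G.degree v) :
    ∃ P : Finset W, (∀ x ∈ P, #(nbhdIn G P x) + 6 ≤ 5 * m) ∧
      ∀ x ∈ Pᶜ, #(nbhdIn G Pᶜ x) + 6 ≤ 5 * m := by
  have : Nonempty W := Fintype.card_pos_iff.1 (by omega)
  have hm := pos_of_fanFree hG
  obtain ⟨K, L, hK, hL, hKL, hKn, hLn⟩ := exists_isIndepSet_pair hG (by omega) hdeg
  let P : Finset W := {z | z ∉ L ∧ #(nbhdIn G K z) < m}
  have hKLc : #(K ∪ L)ᶜ + 5 ≤ 4 * m := by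
    have := card_union_of_disjoint hKL
    have := card_add_card_compl (K ∪ L)
    omega
  have hPK : #(P \ K) ≤ #(K ∪ L)ᶜ := card_le_card fun z hz => by
    simp only [P, mem_sdiff, mem_filter_univ, mem_compl, mem_union] at hz ⊢
    tauto
  have hPL : #(Pᶜ \ L) ≤ #(K ∪ L)ᶜ := card_le_card fun z hz => by
    simp only [P, mem_sdiff, mem_filter_univ, mem_compl, mem_union] at hz ⊢
    refine fun hzKL => hz.1 ⟨hz.2, ?_⟩
    rwa [nbhdIn_eq_empty_of_isIndepSet hK (hzKL.resolve_right hz.2), card_empty]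
  have hnotMem : ∀ z ∈ Pᶜ, #(nbhdIn G L z) < m := by
    intro z hz
    by_cases hzL : z ∈ L
    · rwa [nbhdIn_eq_empty_of_isIndepSet hL hzL, card_empty]
    have hzK : m ≤ #(nbhdIn G K z) := by
      simpa [P, hzL] using hz
    by_contra! hzm
    have h₁ := mt (card_nbhdIn_lt_of_isIndepSet hG hW hdeg hK hKL hKn (z := z)) hzK.not_gt
    have h₂ := mt (card_nbhdIn_lt_of_isIndepSet hG hW hdeg hL hKL.symm hLn (z := z)) hzm.not_gt
    have := hdeg z
    have := card_nbhdIn_add_card_nbhdIn_compl G (K ∪ L) z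
    have := card_le_card (nbhdIn_subset G (K ∪ L)ᶜ z)
    have := card_nbhdIn_union (G := G) hKL z
    omega
  refine ⟨P, fun x hx => ?_, fun x hx => ?_⟩
  · have := card_nbhdIn_le_add_card_sdiff G P K x
    have := (mem_filter_univ x).1 hx
    omega
  · have := card_nbhdIn_le_add_card_sdiff G Pᶜ L x
    have := hnotMem x hx
    omega

lemma exists_degree_lt_of_fanFree (hG : ¬ Contains G (fan m)) (hm : 4 ≤ m)
    (hn : m ^ 2 + 1 ≤ n + m) (hmn : 17 * m < n) (hW : Fintype.card W + 1 = 2 * n) :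
    ∃ v, G.degree v < n := by
  by_contra! hdeg
  obtain ⟨P, hP, hPc⟩ := exists_sparse_bipartition hG (by omega) hW hdeg
  replace hP : ∀ x ∈ P, #(nbhdIn G P x) ≤ 5 * m - 6 := fun x hx => Nat.le_sub_of_add_le (hP x hx)
  replace hPc : ∀ x ∈ Pᶜ, #(nbhdIn G Pᶜ x) ≤ 5 * m - 6 := fun x hx =>
    Nat.le_sub_of_add_le (hPc x hx)
  suffices ∃ v, G.degree v < n from this.elim fun v hv => (hdeg v).not_gt hv
  rcases le_or_gt n #P with hnP | hnP
  · exact exists_degree_lt_of_sparse_bipartition hG hm hn hW hnP hP hPc (by omega)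
  · have := card_add_card_compl P
    exact exists_degree_lt_of_sparse_bipartition hG hm hn hW (by omega) hPc
      (by rwa [compl_compl]) (by omega)

end Bipartition

section LeafStars

variable {V W : Type*} [Fintype V] [Fintype W] {U : SimpleGraph V} {G H : SimpleGraph W}
  {m n : ℕ} {L : Finset V} {c : V}

lemma IsPartialCopy.contains_of_pendants {f : V → W} (hf : IsPartialCopy U H Lᶜ f) (hc : c ∉ L)
    (hL : ∀ u ∈ L, ∀ w, U.Adj u w → w = c) (hcard : Fintype.card V ≤ #(nbhdIn H univ (f c)) + 1) :
    Contains H U := by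
  have : Nonempty W := ⟨f c⟩
  have hcL : c ∈ Lᶜ := mem_compl.2 hc
  have hroom : ∀ u ∈ L, #L ≤ #(nbhdIn H univ (f c) \ (Lᶜ.erase c).image f) := fun u _ => by
    have := le_card_sdiff ((Lᶜ.erase c).image f) (nbhdIn H univ (f c))
    have : #((Lᶜ.erase c).image f) ≤ #(Lᶜ.erase c) := card_image_le
    have := card_erase_add_one hcL
    have := card_add_card_compl L
    omega
  obtain ⟨g, hg, hgL⟩ := exists_injOn_forall_mem hroom
  have hgc : ∀ u ∈ L, H.Adj (f c) (g u) := fun u hu =>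
    (mem_nbhdIn.1 (mem_sdiff.1 (hgL u hu)).1).2
  have hLi : U.IsIndepSet (L : Set V) := fun u hu v hv _ huv => hc (hL u hu v huv ▸ hv)
  have hcopy := hf.glue (.of_isIndepSet_source hLi hg) disjoint_compl_left
    (fun u hu v hv e => ?_) fun u _ v hv huv => hL v hv u huv.symm ▸ hgc v hv
  · rw [union_comm, union_compl] at hcopy
    exact hcopy.contains
  · by_cases huc : u = c
    · exact (hgc v hv).ne (huc ▸ e)
    · exact (mem_sdiff.1 (hgL v hv)).2 (e ▸ mem_image_of_mem f (mem_erase.2 ⟨huc, hu⟩))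

lemma contains_compl_of_pendants {C : Finset W} {x : W} (hC : G.IsIndepSet (C : Set W))
    (hc : c ∉ L) (hL : ∀ u ∈ L, ∀ w, U.Adj u w → w = c) (hLC : #Lᶜ ≤ #C)
    (hx : Fintype.card V ≤ #(nbhdIn Gᶜ univ x) + 1) (hxC : #(nbhdIn U Lᶜ c) ≤ #(nbhdIn Gᶜ C x)) :
    Contains Gᶜ U := by
  have : Nonempty W := ⟨x⟩
  have hcL : c ∈ Lᶜ := mem_compl.2 hc
  let A : V → Finset W := fun u => if U.Adj c u then nbhdIn Gᶜ C x else C.erase x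
  have h_hall : ∀ t ⊆ Lᶜ.erase c, #t ≤ #(t.biUnion A) := fun t ht => by
    rcases t.eq_empty_or_nonempty with rfl | ⟨v, hv⟩
    · exact (card_empty).trans_le (Nat.zero_le _)
    by_cases ht_adj : ∀ u ∈ t, U.Adj c u
    · calc #t ≤ #(nbhdIn U Lᶜ c) := card_le_card fun u hu =>
            mem_nbhdIn.2 ⟨mem_of_mem_erase (ht hu), ht_adj u hu⟩
        _ ≤ #(A v) := by rwa [show A v = nbhdIn Gᶜ C x from if_pos (ht_adj v hv)]
        _ ≤ #(t.biUnion A) := card_le_card (subset_biUnion_of_mem A hv)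
    · push Not at ht_adj
      obtain ⟨u, hu, hcu⟩ := ht_adj
      calc #t ≤ #(Lᶜ.erase c) := card_le_card ht
        _ ≤ #(C.erase x) := by
          have := pred_card_le_card_erase (s := C) (a := x)
          have := card_erase_add_one hcL
          omega
        _ ≤ #(A u) := by rw [show A u = C.erase x from if_neg hcu]
        _ ≤ #(t.biUnion A) := card_le_card (subset_biUnion_of_mem A hu)
  obtain ⟨f, hf, hfA⟩ := exists_injOn_forall_mem_of_hall h_hall
  have hfC : ∀ u ∈ Lᶜ.erase c, f u ∈ C ∧ f u ≠ x := fun u hu => by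
    have hfu := hfA u hu
    dsimp only [A] at hfu
    split_ifs at hfu
    · exact ⟨(mem_nbhdIn.1 hfu).1, (mem_nbhdIn.1 hfu).2.ne'⟩
    · exact (mem_erase.1 hfu).symm
  have hcopy := (IsPartialCopy.of_isIndepSet_target (U := U) hC hf fun u hu => (hfC u hu).1).update
    (notMem_erase c Lᶜ) (fun u hu => (hfC u hu).2) fun u hu huc => by
      have hfu := hfA u hu
      rw [show A u = nbhdIn Gᶜ C x from if_pos huc.symm] at hfu
      exact (mem_nbhdIn.1 hfu).2.symm
  rw [insert_erase hcL] at hcopy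
  exact hcopy.contains_of_pendants hc hL (by rwa [Function.update_self])

lemma exists_isIndepSet_three_le_card_nbhdIn_compl {K : Finset W} (hG : ¬ Contains G (fan m))
    (hm : 4 ≤ m) (hn : m ^ 2 + 1 ≤ n + m) (hmn : 17 * m < n) (hW : Fintype.card W + 1 = 2 * n)
    (hK : G.IsIndepSet (K : Set W)) (hKn : n + 2 ≤ #K + 2 * m) :
    ∃ (C : Finset W) (x : W), G.IsIndepSet (C : Set W) ∧ n + 2 ≤ #C + 2 * m ∧ G.degree x < n ∧
      3 ≤ #(nbhdIn Gᶜ C x) := by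
  by_cases hlow : ∃ x ∈ K, G.degree x < n
  · obtain ⟨x, hxK, hx⟩ := hlow
    refine ⟨K, x, hK, hKn, hx, ?_⟩
    have := card_nbhdIn_add_compl_of_mem (G := G) hxK
    rw [nbhdIn_eq_empty_of_isIndepSet hK hxK, card_empty] at this
    omega
  · push Not at hlow
    obtain ⟨x, hxK⟩ : K.Nonempty := card_pos.1 (by omega)
    obtain ⟨L, hL, hKL, hLn⟩ := exists_disjoint_isIndepSet_of_fanFree hG hK hxK
    have := hlow x hxK
    obtain ⟨v, hv⟩ := exists_degree_lt_of_fanFree hG hm hn hmn hW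
    have := card_nbhdIn_add_compl_of_mem (G := G) (S := univ) (mem_univ v)
    rw [card_nbhdIn_univ, card_univ] at this
    have := card_nbhdIn_union (G := Gᶜ) (disjoint_compl_right (a := K ∪ L)) v
    rw [union_compl] at this
    have := card_nbhdIn_union (G := Gᶜ) hKL v
    have := card_le_card (nbhdIn_subset Gᶜ (K ∪ L)ᶜ v)
    have := card_union_of_disjoint hKL
    have := card_add_card_compl (K ∪ L)
    by_cases hvK : 3 ≤ #(nbhdIn Gᶜ K v)
    · exact ⟨K, v, hK, hKn, hv, hvK⟩
    · exact ⟨L, v, hL, by omega, hv, by omega⟩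

theorem IsUnicyclic.contains_compl_of_leaf_star {K : Finset W} (hG : ¬ Contains G (fan m))
    (hm : 4 ≤ m) (hn : m ^ 2 + 1 ≤ n + m) (hmn : 17 * m < n) (hW : Fintype.card W + 1 = 2 * n)
    (hU : IsUnicyclic U) (hV : Fintype.card V = n) (hleaves : 2 * m ≤ #(leaves U) + 1)
    (hc : #(leaves U) ≤ #(nbhdIn U (leaves U) c) + 1)
    (hK : G.IsIndepSet (K : Set W)) (hKn : n + 2 ≤ #K + 2 * m) : Contains Gᶜ U := by
  obtain ⟨C, x, hC, hCn, hx, hxC⟩ :=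
    exists_isIndepSet_three_le_card_nbhdIn_compl hG hm hn hmn hW hK hKn
  set L := nbhdIn U (leaves U) c with hL_def
  have hLc : ∀ u ∈ L, ∀ w, U.Adj u w → w = c := fun u hu w huw =>
    eq_of_mem_leaves (mem_nbhdIn.1 hu).1 huw (mem_nbhdIn.1 hu).2.symm
  have hcL : c ∉ L := fun h => (mem_nbhdIn.1 h).2.ne rfl
  have hLL : nbhdIn U L c = L := by
    ext u
    simp only [hL_def, mem_nbhdIn]
    tauto
  have hdeg := card_nbhdIn_add_card_nbhdIn_compl U L c
  rw [hLL] at hdeg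
  have := hU.degree_le c
  have hx_compl := card_nbhdIn_add_compl_of_mem (G := G) (S := univ) (mem_univ x)
  rw [card_nbhdIn_univ, card_univ] at hx_compl
  have := card_add_card_compl L
  exact contains_compl_of_pendants (x := x) hC hcL hLc (by omega) (by omega) (by omega)

end LeafStars

section LeafPlacements

variable {V W : Type*} [Fintype V] {U : SimpleGraph V} {G : SimpleGraph W} {u v c : V}

/-- The neighbour of a leaf; the junk value at an isolated vertex is the vertex itself. -/
noncomputable def support (U : SimpleGraph V) (v : V) : V :=
  if h : ∃ w, U.Adj v w then h.choose else v

lemma adj_support (hv : v ∈ leaves U) : U.Adj v (support U v) := by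
  have h : ∃ w, U.Adj v w :=
    (U.degree_pos_iff_exists_adj v).1 (by rw [mem_leaves.1 hv]; exact one_pos)
  rw [support, dif_pos h]
  exact h.choose_spec

lemma eq_support_of_adj (hv : v ∈ leaves U) (huv : U.Adj v u) : u = support U v :=
  eq_of_mem_leaves hv huv (adj_support hv)

lemma mem_nbhdIn_leaves_iff : v ∈ nbhdIn U (leaves U) c ↔ v ∈ leaves U ∧ support U v = c := by
  rw [mem_nbhdIn]
  refine and_congr_right fun hv => ⟨fun h => (eq_support_of_adj hv h.symm).symm, ?_⟩
  rintro rfl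
  exact (adj_support hv).symm

lemma IsUnicyclic.contains_compl_of_leaf_placement {ι : Type*} {K : Finset W} {I : Finset ι}
    {ℓ : ι → V} {τ : ι → W} {σ : V → W} (hU : IsUnicyclic U) (hK : G.IsIndepSet (K : Set W))
    (hℓ : Set.InjOn ℓ I) (hℓU : ∀ i ∈ I, ℓ i ∈ leaves U)
    (hσ : Set.InjOn σ (I.image fun i => support U (ℓ i)))
    (hσK : ∀ i ∈ I, σ (support U (ℓ i)) ∈ K)
    (hτ : Set.InjOn τ I) (hτK : ∀ i ∈ I, τ i ∉ K)
    (hadj : ∀ i ∈ I, ¬ G.Adj (τ i) (σ (support U (ℓ i)))) (hcard : Fintype.card V ≤ #K + #I) :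
    Contains Gᶜ U := by
  rcases I.eq_empty_or_nonempty with rfl | ⟨i₀, -⟩
  · exact contains_compl_of_card_le_isIndepSet hK hcard
  have : Nonempty ι := ⟨i₀⟩
  have hinv : ∀ i ∈ I, Function.invFunOn ℓ I (ℓ i) = i := fun i hi => hℓ.leftInvOn_invFunOn hi
  have hdisj : Disjoint (I.image ℓ) (I.image fun i => support U (ℓ i)) := by
    rw [disjoint_left, forall_mem_image]
    intro i hi hi'
    obtain ⟨j, hj, hji⟩ := mem_image.1 hi'
    have hadj_j := adj_support (hℓU j hj)
    exact hU.isIndepSet_leaves (hℓU j hj) (hji ▸ hℓU i hi) hadj_j.ne hadj_j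
  refine contains_compl_of_placement_outside (τ := fun p => τ (Function.invFunOn ℓ I p)) hK hdisj
    ?_ hσ ?_ ?_ ?_ ?_ (by rwa [card_image_of_injOn hℓ])
  · simp only [forall_mem_image]
    intro i hi v hiv
    exact mem_image.2 ⟨i, hi, (eq_support_of_adj (hℓU i hi) hiv).symm⟩
  · simpa only [forall_mem_image] using hσK
  · rw [coe_image]
    rintro _ ⟨i, hi, rfl⟩ _ ⟨j, hj, rfl⟩ hij
    dsimp only at hij
    rw [hinv i hi, hinv j hj] at hij
    rw [hτ hi hj hij]
  · simp only [forall_mem_image]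
    exact fun i hi => (hinv i hi).symm ▸ hτK i hi
  · simp only [forall_mem_image]
    intro i hi j _ hij
    rw [hinv i hi, eq_support_of_adj (hℓU i hi) hij]
    exact hadj i hi

end LeafPlacements

section SparseAttachment

variable {V W : Type*} {G : SimpleGraph W} {K X Y A F : Finset W} {c x : W} {m t : ℕ}

/-- Every vertex of `X` has at most `3m - 4` neighbours in `K`, and all but at most three of them
have fewer than `m`; the supports of leaves placed on `X` then fit into `K`. -/
structure IsSparselyAttached (G : SimpleGraph W) (K X : Finset W) (m : ℕ) : Prop where
  card_lt : ∀ z ∈ X, #(nbhdIn G K z) + 3 < 3 * m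
  card_filter_le : #{z ∈ X | m ≤ #(nbhdIn G K z)} ≤ 3

namespace IsSparselyAttached

lemma mono (h : IsSparselyAttached G K X m) (hYX : Y ⊆ X) : IsSparselyAttached G K Y m where
  card_lt z hz := h.card_lt z (hYX hz)
  card_filter_le := (card_le_card (filter_subset_filter _ hYX)).trans h.card_filter_le

lemma sum_card_nbhdIn_le (h : IsSparselyAttached G K X m) :
    ∑ z ∈ X, #(nbhdIn G K z) ≤ #X * (m - 1) + 3 * (2 * m - 3) := by
  calc ∑ z ∈ X, #(nbhdIn G K z)
      ≤ ∑ z ∈ X, ((m - 1) + if m ≤ #(nbhdIn G K z) then 2 * m - 3 else 0) := by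
        refine sum_le_sum fun z hz => ?_
        have := h.card_lt z hz
        split_ifs <;> omega
    _ = #X * (m - 1) + #{z ∈ X | m ≤ #(nbhdIn G K z)} * (2 * m - 3) := by
        rw [sum_add_distrib, ← sum_filter, sum_const, sum_const, smul_eq_mul, smul_eq_mul]
    _ ≤ #X * (m - 1) + 3 * (2 * m - 3) :=
        Nat.add_le_add_left (Nat.mul_le_mul_right _ h.card_filter_le) _

lemma card_mul_le (h : IsSparselyAttached G K X m) (hX : #X + 2 ≤ 2 * m) {s : Finset W} {r : ℕ}
    (hs : s ⊆ K) (hr : ∀ y ∈ s, r ≤ #(nbhdIn G X y)) :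
    #s * r ≤ (2 * m - 2) * (m - 1) + 3 * (2 * m - 3) := by
  calc #s * r ≤ ∑ y ∈ s, #(nbhdIn G X y) := by
        rw [← smul_eq_mul]
        exact card_nsmul_le_sum _ _ _ hr
    _ ≤ ∑ y ∈ K, #(nbhdIn G X y) := sum_le_sum_of_subset hs
    _ = ∑ z ∈ X, #(nbhdIn G K z) := sum_card_nbhdIn_comm G K X
    _ ≤ #X * (m - 1) + 3 * (2 * m - 3) := h.sum_card_nbhdIn_le
    _ ≤ (2 * m - 2) * (m - 1) + 3 * (2 * m - 3) := by gcongr; omega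

lemma exists_card_nbhdIn_le_two (h : IsSparselyAttached G K X m) (hm : 18 ≤ m)
    (hX : #X + 2 ≤ 2 * m) (hK : m ^ 2 + 6 ≤ #K + 5 * m) : ∃ x ∈ K, #(nbhdIn G X x) ≤ 2 := by
  by_contra! hlarge
  have hcount := h.card_mul_le hX Subset.rfl hlarge
  obtain ⟨k, rfl⟩ := Nat.exists_eq_add_of_le' hm
  rw [show 2 * (k + 18) - 2 = 2 * k + 34 by omega, show k + 18 - 1 = k + 17 by omega,
    show 2 * (k + 18) - 3 = 2 * k + 33 by omega] at hcount
  nlinarith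

lemma exists_subset_card_nbhdIn_le (h : IsSparselyAttached G K X m) (hm : 18 ≤ m)
    (hX : #X + 2 ≤ 2 * m) (hK : m ^ 2 + 6 ≤ #K + 5 * m) (hx : #(nbhdIn G X x) ≤ 2) :
    ∃ T ⊆ K, x ∉ T ∧ 2 * m ≤ #T + 8 ∧
      ∀ y ∈ T, #(nbhdIn G X y) ≤ 6 ∧ ∀ z ∈ nbhdIn G X x, ¬ G.Adj y z := by
  set B := (nbhdIn G X x).biUnion (nbhdIn G K) with hB_def
  set D := {y ∈ K | 7 ≤ #(nbhdIn G X y)} with hD_def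
  have hB : #B ≤ 2 * (3 * m - 4) := by
    refine (card_biUnion_le_card_mul _ _ (3 * m - 4) fun z hz => ?_).trans
      (Nat.mul_le_mul_right _ hx)
    have := h.card_lt z (nbhdIn_subset G X x hz)
    omega
  have hD := h.card_mul_le hX (s := D) (r := 7) (filter_subset _ K) fun y hy => (mem_filter.1 hy).2
  refine ⟨K \ insert x (B ∪ D), sdiff_subset, fun hxT => (mem_sdiff.1 hxT).2 (mem_insert_self x _),
    ?_, fun y hy => ?_⟩
  · have := le_card_sdiff (insert x (B ∪ D)) K
    have := card_insert_le x (B ∪ D)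
    have := card_union_le B D
    obtain ⟨k, rfl⟩ := Nat.exists_eq_add_of_le' hm
    rw [show 2 * (k + 18) - 2 = 2 * k + 34 by omega, show k + 18 - 1 = k + 17 by omega,
      show 2 * (k + 18) - 3 = 2 * k + 33 by omega] at hD
    have hKT : #K ≤ #(K \ insert x (B ∪ D)) + 1 + 2 * (3 * k + 50) + #D := by omega
    nlinarith
  · simp only [mem_sdiff, mem_insert, mem_union, not_or, hB_def, hD_def, mem_biUnion, mem_filter,
      not_exists, not_and, not_le] at hy
    obtain ⟨hyK, -, hyB, hyD⟩ := hy
    exact ⟨Nat.le_of_lt_succ (hyD hyK), fun z hz hyz => hyB z hz (mem_nbhdIn.2 ⟨hyK, hyz.symm⟩)⟩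

end IsSparselyAttached

lemma lt_of_four_le_deficit {a f i k m : ℕ} (hm : 18 ≤ m) (hi : 4 ≤ i) (hai : a + i + 2 ≤ 2 * m)
    (hif : 2 * i ≤ f + 1) (hk : m ^ 2 + 6 ≤ k + 5 * m) :
    a * (m - 1) + f * (3 * m - 4) < k * (f + 1 - i) := by
  obtain ⟨p, rfl⟩ := Nat.exists_eq_add_of_le' hm
  obtain ⟨j, hj⟩ : ∃ j, f + 1 - i = j + 4 := Nat.exists_eq_add_of_le' (by omega)
  rw [hj, show p + 18 - 1 = p + 17 by omega, show 3 * (p + 18) - 4 = 3 * p + 50 by omega]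
  calc a * (p + 17) + f * (3 * p + 50)
      ≤ (2 * p + 30) * (p + 17) + (2 * j + 7) * (3 * p + 50) := by gcongr <;> omega
    _ < (p ^ 2 + 31 * p + 240) * (j + 4) := by nlinarith
    _ ≤ k * (j + 4) := Nat.mul_le_mul_right _ (by nlinarith)

lemma exists_isSparselyAttached (hm : 18 ≤ m) (ht : t + 2 ≤ 2 * m) (hAF : Disjoint A F)
    (hA : ∀ z ∈ A, #(nbhdIn G K z) < m) (hF : ∀ z ∈ F, #(nbhdIn G K z) + 3 < 3 * m)
    (hK : ∀ x ∈ K, #A + #F < #(nbhdIn G (A ∪ F) x) + t) (hKm : m ^ 2 + 6 ≤ #K + 5 * m)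
    (htAF : t ≤ #A + #F) (htAF' : 2 * t ≤ 2 * #A + #F + 1) :
    ∃ X ⊆ A ∪ F, #X = t ∧ IsSparselyAttached G K X m := by
  have hi : t - #A ≤ 3 := by
    by_contra! hi
    have hcount := lt_of_four_le_deficit hm hi (a := #A) (f := #F) (by omega) (by omega) hKm
    refine hcount.not_ge ?_
    calc #K * (#F + 1 - (t - #A)) ≤ ∑ x ∈ K, #(nbhdIn G (A ∪ F) x) := by
          rw [← smul_eq_mul]
          refine card_nsmul_le_sum _ _ _ fun x hx => ?_
          have := hK x hx
          omega
      _ = ∑ z ∈ A, #(nbhdIn G K z) + ∑ z ∈ F, #(nbhdIn G K z) := by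
          rw [sum_card_nbhdIn_comm, sum_union hAF]
      _ ≤ #A * (m - 1) + #F * (3 * m - 4) := by
          gcongr <;> refine sum_le_card_nsmul _ _ _ fun z hz => ?_
          · exact Nat.le_sub_one_of_lt (hA z hz)
          · have := hF z hz
            omega
  obtain ⟨F₀, hF₀, hF₀_card⟩ := exists_subset_card_eq (show t - #A ≤ #F by omega)
  obtain ⟨A₀, hA₀, hA₀_card⟩ := exists_subset_card_eq (show t - (t - #A) ≤ #A by omega)
  refine ⟨A₀ ∪ F₀, union_subset_union hA₀ hF₀, ?_, fun z hz => ?_, ?_⟩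
  · rw [card_union_of_disjoint (disjoint_of_subset_left hA₀ (disjoint_of_subset_right hF₀ hAF))]
    omega
  · rcases mem_union.1 hz with hz | hz
    · have := hA z (hA₀ hz)
      omega
    · exact hF z (hF₀ hz)
  · refine (card_le_card fun z hz => ?_).trans (hF₀_card.trans_le hi)
    obtain ⟨hz, hzm⟩ := mem_filter.1 hz
    exact (mem_union.1 hz).resolve_left fun hzA => (hA z (hA₀ hzA)).not_ge hzm

end SparseAttachment

section ConstrainedPlacements

variable {V W : Type*} {G : SimpleGraph W} {X : Finset W} {c : V} {x : W}

/-- Hall's condition: a set of more than `r` vertices of `X` is served by all of `Q`, a subset of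
the neighbours of `x` by `D`, and any other set of at most `r` vertices by `C`. -/
lemma exists_injOn_forall_not_adj [Nonempty V] {ρ : V → W} {Q C D : Finset V} {r : ℕ}
    (hQX : #X ≤ #Q) (hQ : ∀ p ∈ Q, #(nbhdIn G X (ρ p)) ≤ r)
    (hCQ : C ⊆ Q) (hC : r ≤ #C) (hρC : ∀ p ∈ C, ρ p = x)
    (hDQ : D ⊆ Q) (hD : #(nbhdIn G X x) ≤ #D)
    (hρD : ∀ p ∈ D, ∀ z ∈ nbhdIn G X x, ¬ G.Adj (ρ p) z) :
    ∃ φ : W → V, Set.InjOn φ X ∧ ∀ z ∈ X, φ z ∈ Q ∧ ¬ G.Adj (ρ (φ z)) z := by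
  have h_hall : ∀ S ⊆ X, #S ≤ #(S.biUnion fun z => {p ∈ Q | ¬ G.Adj (ρ p) z}) := by
    intro S hSX
    rcases S.eq_empty_or_nonempty with rfl | ⟨z₀, hz₀⟩
    · simp only [card_empty, zero_le]
    by_cases hSr : r < #S
    · refine (card_le_card hSX).trans (hQX.trans (card_le_card fun p hp => ?_))
      obtain ⟨z, hzS, hz⟩ := exists_mem_notMem_of_card_lt_card ((hQ p hp).trans_lt hSr)
      exact mem_biUnion.2 ⟨z, hzS, mem_filter.2 ⟨hp, fun h => hz (mem_nbhdIn.2 ⟨hSX hzS, h⟩)⟩⟩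
    by_cases hSx : S ⊆ nbhdIn G X x
    · refine (card_le_card hSx).trans (hD.trans (card_le_card fun p hp => ?_))
      exact mem_biUnion.2 ⟨z₀, hz₀, mem_filter.2 ⟨hDQ hp, hρD p hp z₀ (hSx hz₀)⟩⟩
    · obtain ⟨z, hzS, hz⟩ := not_subset.1 hSx
      refine (not_lt.1 hSr).trans (hC.trans (card_le_card fun p hp => ?_))
      exact mem_biUnion.2 ⟨z, hzS, mem_filter.2
        ⟨hCQ hp, fun h => hz (mem_nbhdIn.2 ⟨hSX hzS, hρC p hp ▸ h⟩)⟩⟩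
  obtain ⟨φ, hφ, hφQ⟩ := exists_injOn_forall_mem_of_hall h_hall
  exact ⟨φ, hφ, fun z hz => mem_filter.1 (hφQ z hz)⟩

lemma exists_injOn_apply_eq {S : Finset V} {T : Finset W} (hST : #(S.erase c) ≤ #T)
    (hx : x ∉ T) : ∃ σ : V → W, Set.InjOn σ S ∧ σ c = x ∧ ∀ u ∈ S, u ≠ c → σ u ∈ T := by
  have : Nonempty W := ⟨x⟩
  obtain ⟨σ, hσ, hσT⟩ := exists_injOn_forall_mem (s := S.erase c) (A := fun _ => T) fun _ _ => hST
  have hmem : ∀ u ∈ S, u ≠ c → σ u ∈ T := fun u hu huc => hσT u (mem_erase.2 ⟨huc, hu⟩)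
  refine ⟨Function.update σ c x, fun u hu v hv huv => ?_, Function.update_self .., ?_⟩
  · by_cases huc : u = c <;> by_cases hvc : v = c
    · rw [huc, hvc]
    · rw [huc, Function.update_self, Function.update_of_ne hvc] at huv
      exact absurd (huv ▸ hmem v hv hvc) hx
    · rw [hvc, Function.update_self, Function.update_of_ne huc] at huv
      exact absurd (huv ▸ hmem u hu huc) hx
    · rw [Function.update_of_ne huc, Function.update_of_ne hvc] at huv
      exact hσ (mem_erase.2 ⟨huc, hu⟩) (mem_erase.2 ⟨hvc, hv⟩) huv
  · intro u hu huc
    rw [Function.update_of_ne huc]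
    exact hmem u hu huc

end ConstrainedPlacements

section SparseLeafPlacements

variable {V W : Type*} [Fintype V] {U : SimpleGraph V} {G : SimpleGraph W}
  {K K' X : Finset W} {c : V} {m : ℕ}

lemma IsUnicyclic.contains_compl_of_leaf_stars_le_five (hm : 18 ≤ m) (hU : IsUnicyclic U)
    (hK : G.IsIndepSet (K : Set W)) (hK' : K' ⊆ K) (hK'm : m ^ 2 + 6 ≤ #K' + 5 * m)
    (hXK : Disjoint X K) (hXm : #X + 2 ≤ 2 * m) (hX : IsSparselyAttached G K' X m)
    (hXU : #X ≤ #(leaves U)) (hcard : Fintype.card V ≤ #K + #X)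
    (hstar : ∀ y, #(nbhdIn U (leaves U) y) ≤ 5) : Contains Gᶜ U := by
  have : 18 * m ≤ m ^ 2 := by nlinarith
  obtain ⟨w, -⟩ : K'.Nonempty := card_pos.1 (by omega)
  have : Nonempty W := ⟨w⟩
  have := hU.connected.nonempty
  obtain ⟨φ, hφ, hφU⟩ := exists_injOn_forall_mem (s := X) (A := fun _ => leaves U) fun _ _ => hXU
  let fibre : V → Finset W := fun q => {z ∈ X | support U (φ z) = q}
  have hfibre : ∀ q, #(fibre q) ≤ 5 := by
    refine fun q => (card_le_card_of_injOn φ (fun z hz => ?_) (hφ.mono ?_)).trans (hstar q)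
    · obtain ⟨hz, hzq⟩ := mem_filter.1 hz
      exact mem_nbhdIn_leaves_iff.2 ⟨hφU z hz, hzq⟩
    · exact coe_subset.2 (filter_subset _ X)
  have hfree : ∀ q ∈ X.image (fun z => support U (φ z)),
      #(X.image fun z => support U (φ z)) ≤ #(K' \ (fibre q).biUnion (nbhdIn G K')) := by
    intro q _
    have h_forbidden : #((fibre q).biUnion (nbhdIn G K')) ≤ 5 * (m - 1) + 3 * (2 * m - 3) :=
      calc #((fibre q).biUnion (nbhdIn G K'))
          ≤ ∑ z ∈ fibre q, #(nbhdIn G K' z) := card_biUnion_le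
        _ ≤ #(fibre q) * (m - 1) + 3 * (2 * m - 3) :=
            (hX.mono (filter_subset _ X)).sum_card_nbhdIn_le
        _ ≤ 5 * (m - 1) + 3 * (2 * m - 3) := by gcongr; exact hfibre q
    have := le_card_sdiff ((fibre q).biUnion (nbhdIn G K')) K'
    have := card_image_le (s := X) (f := fun z => support U (φ z))
    omega
  obtain ⟨σ, hσ, hσK'⟩ := exists_injOn_forall_mem hfree
  simp only [forall_mem_image, mem_sdiff, mem_biUnion, not_exists, not_and, fibre, mem_filter,
    mem_nbhdIn] at hσK'
  exact hU.contains_compl_of_leaf_placement hK hφ hφU hσ (fun z hz => hK' (hσK' hz).1)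
    (Set.injOn_id _) (fun z hz => disjoint_left.1 hXK hz)
    (fun z hz => (hσK' hz).2 z ⟨hz, rfl⟩ (hσK' hz).1) hcard

lemma exists_subset_leaves {r s t : ℕ} (hr : r ≤ #(nbhdIn U (leaves U) c))
    (hs : #(nbhdIn U (leaves U) c) + s ≤ #(leaves U)) (ht : t ≤ #(leaves U)) :
    ∃ Q C D, Q ⊆ leaves U ∧ #Q = max t (r + s) ∧
      C ⊆ Q ∧ #C = r ∧ (∀ p ∈ C, support U p = c) ∧
      D ⊆ Q ∧ #D = s ∧ ∀ p ∈ D, support U p ≠ c := by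
  have hL := nbhdIn_subset U (leaves U) c
  have hs' : s ≤ #(leaves U \ nbhdIn U (leaves U) c) := by
    rw [card_sdiff_of_subset hL]
    omega
  obtain ⟨C, hC, hC_card⟩ := exists_subset_card_eq hr
  obtain ⟨D, hD, hD_card⟩ := exists_subset_card_eq hs'
  have hCD : #(C ∪ D) ≤ r + s := hC_card ▸ hD_card ▸ card_union_le C D
  obtain ⟨Q, hCDQ, hQ, hQ_card⟩ := exists_subsuperset_card_eq
    (union_subset (hC.trans hL) (hD.trans sdiff_subset)) (hCD.trans (le_max_right t _))
    (max_le ht (by omega))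
  refine ⟨Q, C, D, hQ, hQ_card, subset_union_left.trans hCDQ, hC_card, fun p hp => ?_,
    subset_union_right.trans hCDQ, hD_card, fun p hp hpc => ?_⟩
  · exact (mem_nbhdIn_leaves_iff.1 (hC hp)).2
  · obtain ⟨hpU, hpL⟩ := mem_sdiff.1 (hD hp)
    exact hpL (mem_nbhdIn_leaves_iff.2 ⟨hpU, hpc⟩)

lemma IsUnicyclic.contains_compl_of_six_le_leaf_star (hm : 18 ≤ m) (hU : IsUnicyclic U)
    (hK : G.IsIndepSet (K : Set W)) (hK' : K' ⊆ K) (hK'm : m ^ 2 + 6 ≤ #K' + 5 * m)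
    (hXK : Disjoint X K) (hXm : #X + 2 ≤ 2 * m) (hX : IsSparselyAttached G K' X m)
    (hXU : #X ≤ #(leaves U)) (hcard : Fintype.card V ≤ #K + #X)
    (hc : 6 ≤ #(nbhdIn U (leaves U) c)) (hc' : #(nbhdIn U (leaves U) c) + 2 ≤ #(leaves U)) :
    Contains Gᶜ U := by
  obtain ⟨x, hxK', hx⟩ := hX.exists_card_nbhdIn_le_two hm hXm hK'm
  obtain ⟨T, hTK', hxT, hT_card, hT⟩ := hX.exists_subset_card_nbhdIn_le hm hXm hK'm hx
  obtain ⟨Q, C, D, hQU, hQ_card, hCQ, hC_card, hC, hDQ, hD_card, hD⟩ :=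
    exists_subset_leaves hc hc' hXU
  have h_erase : #((Q.image (support U)).erase c) ≤ #T := by
    have h_sub : (Q.image (support U)).erase c ⊆ (Q \ C).image (support U) := by
      intro q hq
      obtain ⟨hqc, hq⟩ := mem_erase.1 hq
      obtain ⟨p, hp, rfl⟩ := mem_image.1 hq
      exact mem_image_of_mem _ (mem_sdiff.2 ⟨hp, fun hpC => hqc (hC p hpC)⟩)
    have := (card_le_card h_sub).trans card_image_le
    have := card_sdiff_of_subset hCQ
    omega
  obtain ⟨σ, hσ, hσc, hσT⟩ := exists_injOn_apply_eq h_erase hxT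
  have hσQ : ∀ p ∈ Q, σ (support U p) = x ∨ σ (support U p) ∈ T := fun p hp =>
    (eq_or_ne (support U p) c).imp (fun hpc => (congrArg σ hpc).trans hσc)
      (hσT _ (mem_image_of_mem _ hp))
  have : Nonempty V := ⟨c⟩
  obtain ⟨φ, hφ, hφQ⟩ := exists_injOn_forall_not_adj (G := G) (X := X) (x := x) (r := 6)
    (ρ := fun p => σ (support U p)) (hQ_card ▸ le_max_left _ _)
    (fun p hp => (hσQ p hp).elim (fun h => h ▸ hx.trans (by norm_num)) fun h => (hT _ h).1)
    hCQ hC_card.ge (fun p hp => (congrArg σ (hC p hp)).trans hσc)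
    hDQ (hx.trans hD_card.ge)
    fun p hp => (hT _ (hσT _ (mem_image_of_mem _ (hDQ hp)) (hD p hp))).2
  refine hU.contains_compl_of_leaf_placement (ι := W) (τ := id) hK hφ
    (fun z hz => hQU (hφQ z hz).1) (hσ.mono ?_) (fun z hz => hK' ?_) (Set.injOn_id _)
    (fun z hz => disjoint_left.1 hXK hz) (fun z hz h => (hφQ z hz).2 h.symm) hcard
  · rw [coe_subset, image_subset_iff]
    exact fun z hz => mem_image_of_mem _ (hφQ z hz).1
  · exact (hσQ _ (hφQ z hz).1).elim (fun h => h ▸ hxK') fun h => hTK' h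

lemma IsUnicyclic.contains_compl_of_isSparselyAttached (hm : 18 ≤ m) (hU : IsUnicyclic U)
    (hK : G.IsIndepSet (K : Set W)) (hK' : K' ⊆ K) (hK'm : m ^ 2 + 6 ≤ #K' + 5 * m)
    (hXK : Disjoint X K) (hXm : #X + 2 ≤ 2 * m) (hX : IsSparselyAttached G K' X m)
    (hXU : #X ≤ #(leaves U)) (hcard : Fintype.card V ≤ #K + #X)
    (hstar : ∀ y, #(nbhdIn U (leaves U) y) + 2 ≤ #(leaves U)) : Contains Gᶜ U := by
  by_cases hlarge : ∃ c, 6 ≤ #(nbhdIn U (leaves U) c)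
  · obtain ⟨c, hc⟩ := hlarge
    exact hU.contains_compl_of_six_le_leaf_star hm hK hK' hK'm hXK hXm hX hXU hcard hc (hstar c)
  · push Not at hlarge
    exact hU.contains_compl_of_leaf_stars_le_five hm hK hK' hK'm hXK hXm hX hXU hcard
      fun y => Nat.le_of_lt_succ (hlarge y)

end SparseLeafPlacements

lemma exists_partition_lt {α : Type*} (Z : Finset α) (a b : α → ℕ) (m : ℕ) :
    ∃ A B F, A ⊆ Z ∧ B ⊆ Z ∧ F ⊆ Z ∧ Disjoint A F ∧ Disjoint B F ∧ (∀ z ∈ A, a z < m) ∧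
      (∀ z ∈ B, b z < m) ∧ (∀ z ∈ F, m ≤ a z ∧ m ≤ b z) ∧ #A + #B + #F = #Z := by
  let R := {z ∈ Z | ¬ a z < m}
  have hR : R ⊆ Z := filter_subset _ Z
  refine ⟨{z ∈ Z | a z < m}, {z ∈ R | b z < m}, {z ∈ R | ¬ b z < m}, filter_subset _ Z,
    (filter_subset _ R).trans hR, (filter_subset _ R).trans hR,
    (disjoint_filter_filter_not Z Z _).mono_right (filter_subset _ R),
    disjoint_filter_filter_not R R _, fun z hz => (mem_filter.1 hz).2,
    fun z hz => (mem_filter.1 hz).2, fun z hz => ?_, ?_⟩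
  · obtain ⟨hzR, hbz⟩ := mem_filter.1 hz
    exact ⟨not_lt.1 (mem_filter.1 hzR).2, not_lt.1 hbz⟩
  · rw [add_assoc, card_filter_add_card_filter_not, card_filter_add_card_filter_not]

section Cores

variable {V W : Type*} [Fintype W] {G : SimpleGraph W} {K L A F : Finset W} {x z : W} {m t : ℕ}

/-- The vertices of `K` adjacent in `G` to all but fewer than `t` of the vertices outside `K`. -/
noncomputable def core (G : SimpleGraph W) (K : Finset W) (t : ℕ) : Finset W :=
  {x ∈ K | #(nbhdIn Gᶜ Kᶜ x) < t}

lemma mem_core : x ∈ core G K t ↔ x ∈ K ∧ #(nbhdIn Gᶜ Kᶜ x) < t := mem_filter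

lemma core_subset (G : SimpleGraph W) (K : Finset W) (t : ℕ) : core G K t ⊆ K :=
  filter_subset _ _

lemma card_nbhdIn_compl_lt_of_mem_core (hKL : Disjoint L K) (hx : x ∈ core G K t) :
    #(nbhdIn Gᶜ L x) < t :=
  (card_nbhdIn_mono (fun _ hy => mem_compl.2 (disjoint_left.1 hKL hy)) x).trans_lt
    (mem_core.1 hx).2

lemma card_lt_degree_add_of_mem_core (hx : x ∈ core G K t) :
    Fintype.card W < G.degree x + #K + t := by
  obtain ⟨hxK, hxt⟩ := mem_core.1 hx
  have h_univ := card_nbhdIn_add_compl_of_mem (G := G) (S := univ) (mem_univ x)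
  have h_split := card_nbhdIn_union (G := Gᶜ) (disjoint_compl_right (a := K)) x
  have h_inside := card_nbhdIn_add_compl_of_mem (G := G) hxK
  rw [card_nbhdIn_univ, card_univ] at h_univ
  rw [union_compl] at h_split
  omega

lemma card_nbhdIn_lt_of_le_card_nbhdIn_core (hG : ¬ Contains G (fan m)) (hKL : Disjoint L K)
    (hz : m ≤ #(nbhdIn G (core G K t) z)) : #(nbhdIn G L z) + 1 < m + t := by
  by_contra! hL
  refine (card_nbhdIn_lt_of_fanFree hG (hKL.symm.mono_left (core_subset G K t))
    fun y hy => ?_).not_ge hz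
  have := card_nbhdIn_compl_lt_of_mem_core hKL (mem_nbhdIn.1 hy).1
  omega

variable [Fintype V] {U : SimpleGraph V} {n : ℕ}

/-- Otherwise the supports of `t` leaves can be placed on vertices of `K` with at least `t`
non-neighbours outside `K`, which leaves room for the leaves themselves. -/
lemma IsUnicyclic.card_lt_card_core_add (hU : IsUnicyclic U) (hK : G.IsIndepSet (K : Set W))
    (hcard : Fintype.card V ≤ #K + t) (ht : t ≤ #(leaves U)) (hH : ¬ Contains Gᶜ U) :
    #K < #(core G K t) + t := by
  by_contra! hcore
  refine hH ?_
  obtain ⟨B, hB, hB_card⟩ := exists_subset_card_eq (s := K \ core G K t) (n := t) (by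
    rw [card_sdiff_of_subset (core_subset G K t)]
    omega)
  have hBK : ∀ y ∈ B, y ∈ K ∧ t ≤ #(nbhdIn Gᶜ Kᶜ y) := fun y hy => by
    obtain ⟨hyK, hy⟩ := mem_sdiff.1 (hB hy)
    exact ⟨hyK, not_lt.1 fun h => hy (mem_core.2 ⟨hyK, h⟩)⟩
  rcases t.eq_zero_or_pos with rfl | ht_pos
  · exact contains_compl_of_card_le_isIndepSet hK hcard
  obtain ⟨w, -⟩ : B.Nonempty := card_pos.1 (by omega)
  have : Nonempty W := ⟨w⟩
  obtain ⟨P, hP, hP_card⟩ := exists_subset_card_eq ht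
  obtain ⟨σ, hσ, hσB⟩ := exists_injOn_forall_mem (s := P.image (support U)) (A := fun _ => B)
    fun _ _ => card_image_le.trans (hP_card.trans hB_card.symm).le
  rw [forall_mem_image] at hσB
  obtain ⟨τ, hτ, hτσ⟩ := exists_injOn_forall_mem (s := P)
    (A := fun p => nbhdIn Gᶜ Kᶜ (σ (support U p)))
    fun p hp => hP_card.trans_le (hBK _ (hσB hp)).2
  exact hU.contains_compl_of_leaf_placement (ℓ := id) hK (Set.injOn_id _) hP hσ
    (fun p hp => (hBK _ (hσB hp)).1) hτ (fun p hp => mem_compl.1 (mem_nbhdIn.1 (hτσ p hp)).1)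
    (fun p hp => fun h => ((G.compl_adj _ _).1 (mem_nbhdIn.1 (hτσ p hp)).2).2 h.symm)
    (hcard.trans_eq (by rw [hP_card]))

lemma IsUnicyclic.contains_compl_of_few_into_core (hm : 18 ≤ m) (hn : m ^ 2 + 1 ≤ n + m)
    (hU : IsUnicyclic U) (hV : Fintype.card V = n) (hleaves : 2 * m ≤ #(leaves U) + 1)
    (hstar : ∀ y, #(nbhdIn U (leaves U) y) + 2 ≤ #(leaves U))
    (hK : G.IsIndepSet (K : Set W)) (hKt : #K + t = n) (ht : t + 2 ≤ 2 * m)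
    (hAF : Disjoint A F) (hAK : Disjoint A K) (hFK : Disjoint F K)
    (hA : ∀ z ∈ A, #(nbhdIn G (core G K t) z) < m)
    (hF : ∀ z ∈ F, #(nbhdIn G (core G K t) z) + 3 < 3 * m)
    (htAF : t ≤ #A + #F) (htAF' : 2 * t ≤ 2 * #A + #F + 1) : Contains Gᶜ U := by
  by_contra hH
  have hcore := hU.card_lt_card_core_add hK (hV.trans_le hKt.ge) (by omega) hH
  have hAFK : Disjoint (A ∪ F) K := disjoint_union_left.2 ⟨hAK, hFK⟩
  have hcore_room : m ^ 2 + 6 ≤ #(core G K t) + 5 * m := by omega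
  have hcore_nbhd : ∀ x ∈ core G K t, #A + #F < #(nbhdIn G (A ∪ F) x) + t := by
    intro x hx
    rw [← card_union_of_disjoint hAF, ← card_nbhdIn_add_compl_of_notMem (G := G)
      (disjoint_right.1 hAFK (core_subset G K t hx))]
    exact Nat.add_lt_add_left (card_nbhdIn_compl_lt_of_mem_core hAFK hx) _
  obtain ⟨X, hXAF, rfl, hX⟩ :=
    exists_isSparselyAttached hm ht hAF hA hF hcore_nbhd hcore_room htAF htAF'
  exact hH <| hU.contains_compl_of_isSparselyAttached hm hK (core_subset G K _) hcore_room
    (disjoint_of_subset_left hXAF hAFK) ht hX (by omega) (by omega) hstar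

/-- Two cores `K'` and `L'` compete for the vertices `z` outside `K` and `L`: none has too many
neighbours in both, so one of `K`, `L` keeps enough vertices with few neighbours in its core. -/
theorem IsUnicyclic.contains_compl_of_spread_leaves (hG : ¬ Contains G (fan m)) (hm : 18 ≤ m)
    (hn : m ^ 2 + 1 ≤ n + m) (hW : Fintype.card W + 1 = 2 * n) (hU : IsUnicyclic U)
    (hV : Fintype.card V = n) (hleaves : 2 * m ≤ #(leaves U) + 1)
    (hstar : ∀ y, #(nbhdIn U (leaves U) y) + 2 ≤ #(leaves U))
    (hK : G.IsIndepSet (K : Set W)) (hKn : n + 2 ≤ #K + 2 * m) : Contains Gᶜ U := by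
  by_contra hH
  have hlt : ∀ {C : Finset W}, G.IsIndepSet (C : Set W) → #C < n := fun hC =>
    not_le.1 fun h => hH (contains_compl_of_card_le_isIndepSet hC (hV.trans_le h))
  obtain ⟨t, hKt⟩ := Nat.exists_eq_add_of_le (hlt hK).le
  have hcoreK := hU.card_lt_card_core_add hK (hV.trans_le hKt.le) (by omega) hH
  have : 18 * m ≤ m ^ 2 := by nlinarith
  obtain ⟨x, hx⟩ : (core G K t).Nonempty := card_pos.1 (by omega)
  have hx_degree := card_lt_degree_add_of_mem_core hx
  obtain ⟨L, hL, hKL, hLx⟩ := exists_disjoint_isIndepSet_of_fanFree hG hK (core_subset G K t hx)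
  obtain ⟨s, hLs⟩ := Nat.exists_eq_add_of_le (hlt hL).le
  have hF : ∀ z, m ≤ #(nbhdIn G (core G K t) z) → m ≤ #(nbhdIn G (core G L s) z) →
      #(nbhdIn G (core G K t) z) + 3 < 3 * m ∧ #(nbhdIn G (core G L s) z) + 3 < 3 * m := by
    intro z hzK hzL
    have := card_nbhdIn_lt_of_le_card_nbhdIn_core hG
      (hKL.symm.mono_left (core_subset G L s)) hzK
    have := card_nbhdIn_lt_of_le_card_nbhdIn_core hG (hKL.mono_left (core_subset G K t)) hzL
    omega
  obtain ⟨A, B, F, hA, hB, hF_sub, hAF, hBF, hAm, hBm, hFm, hABF⟩ := exists_partition_lt (K ∪ L)ᶜ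
    (fun z => #(nbhdIn G (core G K t) z)) (fun z => #(nbhdIn G (core G L s) z)) m
  have h_outside : ∀ {C : Finset W}, C ⊆ (K ∪ L)ᶜ → Disjoint C K ∧ Disjoint C L := fun hC =>
    disjoint_union_right.1 (disjoint_of_subset_left hC disjoint_compl_left)
  have := card_add_card_compl (K ∪ L)
  have := card_union_of_disjoint hKL
  have h_room : (t ≤ #A + #F ∧ 2 * t ≤ 2 * #A + #F + 1) ∨
      (s ≤ #B + #F ∧ 2 * s ≤ 2 * #B + #F + 1) := by omega
  rcases h_room with ⟨ht, ht'⟩ | ⟨hs, hs'⟩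
  · exact hH <| hU.contains_compl_of_few_into_core hm hn hV hleaves hstar hK hKt.symm (by omega)
      hAF (h_outside hA).1 (h_outside hF_sub).1 hAm
      (fun z hz => (hF z (hFm z hz).1 (hFm z hz).2).1) ht ht'
  · exact hH <| hU.contains_compl_of_few_into_core hm hn hV hleaves hstar hL hLs.symm (by omega)
      hBF (h_outside hB).2 (h_outside hF_sub).2 hBm
      (fun z hz => (hF z (hFm z hz).1 (hFm z hz).2).2) hs hs'

end Cores

section Embedding

variable {V W : Type*} [Fintype V] [Fintype W] {G : SimpleGraph W} {U : SimpleGraph V}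
  {K : Finset W} {m n : ℕ}

lemma IsUnicyclic.contains_compl_of_isIndepSet (hG : ¬ Contains G (fan m)) (hm : 18 ≤ m)
    (hn : m ^ 2 + 1 ≤ n + m) (hW : Fintype.card W + 1 = 2 * n) (hU : IsUnicyclic U)
    (hV : Fintype.card V = n) (hK : G.IsIndepSet (K : Set W)) (hKn : n + 2 ≤ #K + 2 * m) :
    Contains Gᶜ U := by
  have hmn : 17 * m < n := by nlinarith
  rcases le_total n (#K) with hnK | hnK
  · exact contains_compl_of_card_le_isIndepSet hK (hV.trans_le hnK)
  by_cases hleaves : #(leaves U) + 2 ≤ 2 * m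
  · exact hU.contains_compl_of_card_leaves_le hG hmn hW.ge hV hleaves hK hnK hKn
  by_cases hstar : ∀ c, #(nbhdIn U (leaves U) c) + 2 ≤ #(leaves U)
  · exact hU.contains_compl_of_spread_leaves hG hm hn hW hV (by omega) hstar hK hKn
  · push Not at hstar
    obtain ⟨c, hc⟩ := hstar
    exact hU.contains_compl_of_leaf_star (c := c) hG (by omega) hn hmn hW hV (by omega) (by omega)
      hK hKn

theorem IsUnicyclic.contains_compl_of_fanFree (hG : ¬ Contains G (fan m)) (hm : 18 ≤ m)
    (hn : m ^ 2 + 1 ≤ n + m) (hW : Fintype.card W + 1 = 2 * n) (hU : IsUnicyclic U)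
    (hV : Fintype.card V = n) : Contains Gᶜ U := by
  by_cases hdeg : ∀ x, G.degree x < n
  · refine hU.contains_of_forall_le_degree (fun x => ?_) fun k hk₃ hk => ?_
    · have h_univ := card_nbhdIn_add_compl_of_mem (G := G) (S := univ) (mem_univ x)
      have := hdeg x
      rw [card_nbhdIn_univ, card_nbhdIn_univ, card_univ] at h_univ
      omega
    · exact contains_compl_cycleGraph_of_fanFree hG (by nlinarith) hW.ge hk₃ (hV ▸ hk)
  · push Not at hdeg
    obtain ⟨v, hv⟩ := hdeg
    obtain ⟨K, -, hK, hKv⟩ := exists_isIndepSet_of_fanFree hG v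
    exact hU.contains_compl_of_isIndepSet hG hm hn hW hV hK (by omega)

end Embedding

end FanRamsey

/-- **Theorem 5 (upper bound)**: for `m ≥ 18` and `n ≥ m² - m + 1`, any graph `G` on `2n - 1`
vertices contains the fan `F_m` or its complement contains any given unicyclic graph
(connected, `n` vertices, exactly `n` edges). -/
theorem ramsey_unicyclic_fan_upper {V W : Type*} [Fintype V] [Fintype W]
    (m n : ℕ) (hm : 18 ≤ m) (hn : m ^ 2 - m + 1 ≤ n)
    (U : SimpleGraph V) (hUconn : U.Connected) (hUcard : Fintype.card V = n)
    (hUedges : U.edgeSet.ncard = n)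
    (G : SimpleGraph W) (hGcard : Fintype.card W = 2 * n - 1) :
    Contains G (fan m) ∨ Contains Gᶜ U := by
  rw [or_iff_not_imp_left]
  intro hG
  have hU : FanRamsey.IsUnicyclic U := ⟨hUconn, hUedges.trans hUcard.symm⟩
  exact hU.contains_compl_of_fanFree hG hm (by omega) (by omega) hUcard
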